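/- arXiv:1502.06159 — 10 statements merged into one kernel-verified Lean document; each statement's English description precedes it below -/
import Mathlib

section
/- Let X and Y be metric spaces, (x̄,ȳ) ∈ X×Y, and f : X×Y → ℝ∪{+∞} with f(x̄,ȳ)=0 satisfying (P1) and (P2). Then the strict slopes of f at (x̄,ȳ) satisfy the chain of inequalities |∇f|^◇(x̄,ȳ) ≥ |∇f|^{>+}(x̄,ȳ) ≥ |∇f|^>(x̄,ȳ). -/
open Filter Metric Set Topology ENNReal

/-- The parametric metric `d_ρ((x,y),(u,v)) = max{d(x,u), ρ·d(y,v)}` on a product. -/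
noncomputable def dRho {X Y : Type*} [MetricSpace X] [MetricSpace Y]
    (ρ : ℝ) (p q : X × Y) : ℝ :=
  max (dist p.1 q.1) (ρ * dist p.2 q.2)

/-- The (local) ρ-slope `|∇f|_ρ(x,y)` of `f` at `p = (x,y)`. -/
noncomputable def slopeRho {X Y : Type*} [MetricSpace X] [MetricSpace Y]
    (f : X × Y → EReal) (ρ : ℝ) (p : X × Y) : ℝ≥0∞ :=
  Filter.limsup
    (fun q => ENNReal.ofReal (max ((f p - f q).toReal) 0) / ENNReal.ofReal (dRho ρ q p))
    (𝓝[≠] p)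

/-- The nonlocal ρ-slope `|∇f|_ρ^◇(x,y)` of `f` at `p = (x,y)`. -/
noncomputable def nonlocalSlopeRho {X Y : Type*} [MetricSpace X] [MetricSpace Y]
    (f : X × Y → EReal) (ρ : ℝ) (p : X × Y) : ℝ≥0∞ :=
  ⨆ (q : X × Y) (_ : q ≠ p),
    ENNReal.ofReal (max ((f p - max (f q) 0).toReal) 0) / ENNReal.ofReal (dRho ρ p q)

/-- The strict outer slope `|∇f|^>(x̄,ȳ)`: the limit as `ρ ↓ 0` (equivalently, the
supremum over `ρ > 0`, by monotonicity) of the infimum of ρ-slopes at nearby points. -/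
noncomputable def strictOuterSlope {X Y : Type*} [MetricSpace X] [MetricSpace Y]
    (f : X × Y → EReal) (xbar : X) (ybar : Y) : ℝ≥0∞ :=
  ⨆ (ρ : ℝ) (_ : 0 < ρ),
    ⨅ (p : X × Y) (_ : dist p.1 xbar < ρ ∧ 0 < f p ∧ f p < (ρ : EReal)),
      slopeRho f ρ p

/-- The modified strict outer slope `|∇f|^{>+}(x̄,ȳ)`. -/
noncomputable def modStrictOuterSlope {X Y : Type*} [MetricSpace X] [MetricSpace Y]
    (f : X × Y → EReal) (xbar : X) (ybar : Y) : ℝ≥0∞ :=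
  ⨆ (ρ : ℝ) (_ : 0 < ρ),
    ⨅ (p : X × Y) (_ : dist p.1 xbar < ρ ∧ 0 < f p ∧ f p < (ρ : EReal)),
      max (slopeRho f ρ p)
        (ENNReal.ofReal ((f p).toReal) / ENNReal.ofReal (dist p.1 xbar))

/-- The uniform strict outer slope `|∇f|^◇(x̄,ȳ)`. -/
noncomputable def uniformStrictOuterSlope {X Y : Type*} [MetricSpace X] [MetricSpace Y]
    (f : X × Y → EReal) (xbar : X) (ybar : Y) : ℝ≥0∞ :=
  ⨆ (ρ : ℝ) (_ : 0 < ρ),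
    ⨅ (p : X × Y) (_ : dist p.1 xbar < ρ ∧ 0 < f p ∧ f p < (ρ : EReal)),
      nonlocalSlopeRho f ρ p

theorem aux_le_nonlocal {X Y : Type*} [MetricSpace X] [MetricSpace Y]
    (f : X × Y → EReal) (ρ : ℝ) (p q : X × Y) (hq : q ≠ p) (hfq : f q ≤ 0) :
    ENNReal.ofReal ((f p).toReal) / ENNReal.ofReal (dRho ρ p q) ≤ nonlocalSlopeRho f ρ p := by
  unfold nonlocalSlopeRho
  refine le_trans ?_ (le_iSup₂ q hq)
  rw [max_eq_right hfq, sub_zero]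
  gcongr
  exact le_max_left _ _

theorem aux_dRho_pos {X Y : Type*} [MetricSpace X] [MetricSpace Y]
    (ρ : ℝ) (hρ : 0 < ρ) (p q : X × Y) (hq : q ≠ p) : 0 < dRho ρ p q := by
  unfold dRho
  rw [lt_max_iff]
  by_cases h : p.1 = q.1
  · right
    have : p.2 ≠ q.2 := fun h2 => hq (Prod.ext h h2).symm
    exact mul_pos hρ (dist_pos.2 this)
  · left
    exact dist_pos.2 h

theorem aux_slope_le {X Y : Type*} [MetricSpace X] [MetricSpace Y]
    (f : X × Y → EReal) (ρ ρ0 : ℝ) (hρ : 0 < ρ) (hρ0 : ρ ≤ ρ0) (p : X × Y)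
    (hp : 0 < f p) (hp' : f p ≠ ⊤) :
    slopeRho f ρ0 p ≤ nonlocalSlopeRho f ρ p := by
  by_cases h : ∀ᶠ q in 𝓝[≠] p, 0 ≤ f q
  · unfold slopeRho
    refine limsup_le_of_le (by isBoundedDefault) ?_
    filter_upwards [h, self_mem_nhdsWithin] with q hq hne
    unfold nonlocalSlopeRho
    refine le_trans ?_ (le_iSup₂ q hne)
    rw [max_eq_left hq]
    gcongr
    unfold dRho
    rw [dist_comm q.1, dist_comm q.2]
    gcongr
  · rw [not_eventually] at h
    have ht : 0 < (f p).toReal := EReal.toReal_pos hp hp'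
    have hT : nonlocalSlopeRho f ρ p = ⊤ := by
      refine ENNReal.eq_top_of_forall_nnreal_le fun n => ?_
      have hcont : Tendsto (fun q => dRho ρ p q) (𝓝[≠] p) (𝓝 0) := by
        have hc : Continuous (fun q => dRho ρ p q) := by unfold dRho; fun_prop
        have := hc.tendsto p
        simp only [dRho, dist_self, mul_zero, max_self] at this
        exact this.mono_left nhdsWithin_le_nhds
      have hev : ∀ᶠ q in 𝓝[≠] p, dRho ρ p q < (f p).toReal / ((n : ℝ) + 1) :=
        hcont.eventually_lt_const (by positivity)
      obtain ⟨q, hq, hlt, hne⟩ := (h.and_eventually (hev.and self_mem_nhdsWithin)).exists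
      have hd := aux_dRho_pos ρ hρ p q hne
      refine le_trans ?_ (aux_le_nonlocal f ρ p q hne (not_le.1 hq).le)
      rw [← ENNReal.ofReal_div_of_pos hd, ← ENNReal.ofReal_coe_nnreal]
      apply ENNReal.ofReal_le_ofReal
      rw [le_div_iff₀ hd]
      rw [lt_div_iff₀ (by positivity)] at hlt
      nlinarith
    rw [hT]
    exact le_top

/-- Proposition "Relationships between slopes" (ii):
`|∇f|^◇(x̄,ȳ) ≥ |∇f|^{>+}(x̄,ȳ) ≥ |∇f|^>(x̄,ȳ)`. -/
theorem strict_slopes_chain {X Y : Type*} [MetricSpace X] [MetricSpace Y]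
    (xbar : X) (ybar : Y) (f : X × Y → EReal)
    (hfbot : ∀ p : X × Y, f p ≠ ⊥)
    (hf0 : f (xbar, ybar) = 0)
    (hP1 : ∀ p : X × Y, p.2 ≠ ybar → 0 < f p)
    (hP2 : ∃ c : ℝ, 0 < c ∧ ∃ ε : ℝ, 0 < ε ∧ ∀ p : X × Y,
      0 < f p → f p < (ε : EReal) → ((c * dist p.2 ybar : ℝ) : EReal) ≤ f p) :
    modStrictOuterSlope f xbar ybar ≤ uniformStrictOuterSlope f xbar ybar ∧
    strictOuterSlope f xbar ybar ≤ modStrictOuterSlope f xbar ybar := by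
  constructor
  · obtain ⟨c, hc, ε, hε, hP⟩ := hP2
    refine le_of_forall_lt fun a ha => ?_
    unfold modStrictOuterSlope at ha
    simp only [lt_iSup_iff] at ha
    obtain ⟨ρ0, hρ0, ha⟩ := ha
    have hatop : a ≠ ⊤ := ha.ne_top
    obtain ⟨b, hab, hb⟩ := exists_between ha
    have hbtop : b ≠ ⊤ := hb.ne_top
    refine hab.trans_le ?_
    set ρ := min ρ0 (min ε (c / (b.toReal + 1))) with hρdef
    have hbr : 0 ≤ b.toReal := ENNReal.toReal_nonneg
    have hρ : 0 < ρ := lt_min hρ0 (lt_min hε (by positivity))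
    have h1 : ρ ≤ ρ0 := min_le_left _ _
    have h2 : ρ ≤ ε := (min_le_right _ _).trans (min_le_left _ _)
    have h3 : ρ ≤ c / (b.toReal + 1) := (min_le_right _ _).trans (min_le_right _ _)
    unfold uniformStrictOuterSlope
    refine le_trans ?_ (le_iSup₂ ρ hρ)
    refine le_iInf₂ fun p hp => ?_
    obtain ⟨hpd, hp0, hpρ⟩ := hp
    have hpt : f p ≠ ⊤ := hpρ.ne_top
    have hmax := hb.trans_le (iInf₂_le p
      ⟨hpd.trans_le h1, hp0, hpρ.trans_le (EReal.coe_le_coe_iff.2 h1)⟩)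
    rcases lt_max_iff.1 hmax with h | h
    · exact h.le.trans (aux_slope_le f ρ ρ0 hρ h1 p hp0 hpt)
    · have hne : (xbar, ybar) ≠ p := by
        rintro rfl
        simp [hf0] at hp0
      have hd := aux_dRho_pos ρ hρ p _ hne
      refine le_trans ?_ (aux_le_nonlocal f ρ p _ hne hf0.le)
      have ht : 0 < (f p).toReal := EReal.toReal_pos hp0 hpt
      have hcd : c * dist p.2 ybar ≤ (f p).toReal := by
        have := hP p hp0 (hpρ.trans_le (EReal.coe_le_coe_iff.2 h2))
        rw [← EReal.coe_toReal hpt (hfbot p)] at this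
        exact EReal.coe_le_coe_iff.1 this
      rw [← ENNReal.ofReal_div_of_pos hd, ENNReal.le_ofReal_iff_toReal_le hbtop (by positivity),
        le_div_iff₀ hd]
      unfold dRho
      rw [mul_max_of_nonneg _ _ hbr]
      refine max_le ?_ ?_
      · rcases (dist_nonneg : 0 ≤ dist p.1 xbar).eq_or_lt with h0 | h0
        · simp only [← h0, mul_zero]; exact ht.le
        · rw [← ENNReal.ofReal_div_of_pos h0] at h
          have := (ENNReal.le_ofReal_iff_toReal_le hbtop (by positivity)).1 h.le
          rwa [le_div_iff₀ h0] at this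
      · rw [le_div_iff₀ (by positivity)] at h3
        have hdy : 0 ≤ dist p.2 ybar := dist_nonneg
        refine le_trans ?_ hcd
        simp only
        rw [← mul_assoc]
        gcongr
        nlinarith
  · unfold strictOuterSlope modStrictOuterSlope
    gcongr
    exact le_max_left _ _
end

section
/- Let X and Y be metric spaces, (x̄,ȳ) ∈ X×Y, and f : X×Y → ℝ∪{+∞} with f(x̄,ȳ)=0 satisfying (P1) and (P2). Then the error bound modulus is bounded above by the uniform strict outer slope: Er f(x̄,ȳ) ≤ |∇f|^◇(x̄,ȳ). -/
open Filter Metric Set Topology ENNReal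

/-- An element of `ℝ∪{+∞}` (i.e. an `EReal` different from `⊥`), viewed in `[0,+∞]`
(negative values are sent to `0`). -/
noncomputable def ERealToENNReal (a : EReal) : ℝ≥0∞ :=
  if a = ⊤ then ⊤ else ENNReal.ofReal a.toReal

/-- The error bound modulus
`Er f(x̄,ȳ) = liminf_{x→x̄, f(x,y)>0} f(x,y)/d(x,S(f))`, where
`S(f) = {x : f(x,ȳ) ≤ 0}`. -/
noncomputable def errorBoundModulus {X Y : Type*} [MetricSpace X] [MetricSpace Y]
    (f : X × Y → EReal) (xbar : X) (ybar : Y) : ℝ≥0∞ :=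
  ⨆ (δ : ℝ) (_ : 0 < δ),
    ⨅ (p : X × Y) (_ : dist p.1 xbar < δ ∧ 0 < f p),
      ERealToENNReal (f p) / ENNReal.ofReal (Metric.infDist p.1 {x : X | f (x, ybar) ≤ 0})

/-- Theorem 3T1 (i): the error bound modulus is bounded above by the uniform strict
outer slope: `Er f(x̄,ȳ) ≤ |∇f|^◇(x̄,ȳ)`. -/
theorem errorBound_le_uniformStrictSlope {X Y : Type*} [MetricSpace X] [MetricSpace Y]
    (xbar : X) (ybar : Y) (f : X × Y → EReal)
    (hfbot : ∀ p : X × Y, f p ≠ ⊥)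
    (hf0 : f (xbar, ybar) = 0)
    (hP1 : ∀ p : X × Y, p.2 ≠ ybar → 0 < f p)
    (hP2 : ∃ c : ℝ, 0 < c ∧ ∃ ε : ℝ, 0 < ε ∧ ∀ p : X × Y,
      0 < f p → f p < (ε : EReal) → ((c * dist p.2 ybar : ℝ) : EReal) ≤ f p) :
    errorBoundModulus f xbar ybar ≤ uniformStrictOuterSlope f xbar ybar := by
  obtain ⟨c, hc, ε, hε, hP2⟩ := hP2
  refine ENNReal.le_of_forall_nnreal_lt fun γ hγ => ?_
  rcases eq_or_ne γ 0 with h0 | h0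
  · simp [h0]
  have hγ0 : (0 : ℝ) < γ := by positivity
  unfold errorBoundModulus at hγ
  obtain ⟨δ, hγ⟩ := lt_iSup_iff.1 hγ
  obtain ⟨hδ, hγ⟩ := lt_iSup_iff.1 hγ
  unfold uniformStrictOuterSlope
  have hρ : 0 < min (min δ ε) (c / γ) := by positivity
  have hρ1 : min (min δ ε) (c / γ) ≤ δ := (min_le_left _ _).trans (min_le_left _ _)
  have hρ2 : min (min δ ε) (c / γ) ≤ ε := (min_le_left _ _).trans (min_le_right _ _)
  have hρ3 : min (min δ ε) (c / γ) ≤ c / γ := min_le_right _ _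
  generalize min (min δ ε) (c / γ) = ρ at hρ hρ1 hρ2 hρ3
  refine le_iSup₂_of_le ρ hρ (le_iInf₂ fun p hp => ?_)
  obtain ⟨hp1, hp2, hp3⟩ := hp
  have hlt := hγ.trans_le (iInf₂_le p ⟨hp1.trans_le hρ1, hp2⟩)
  have hle := hP2 p hp2 (hp3.trans_le (EReal.coe_le_coe_iff.2 hρ2))
  have htop : f p ≠ ⊤ := hp3.ne_top
  obtain ⟨a, ha⟩ : ∃ a : ℝ, f p = a := ⟨(f p).toReal, (EReal.coe_toReal htop (hfbot p)).symm⟩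
  rw [ha] at hlt hle hp2
  have ha0 : 0 < a := by exact_mod_cast hp2
  have hle' : c * dist p.2 ybar ≤ a := by exact_mod_cast hle
  have hD : γ * Metric.infDist p.1 {x : X | f (x, ybar) ≤ 0} < a := by
    have h := ENNReal.mul_lt_of_lt_div hlt
    simp only [ERealToENNReal, EReal.coe_ne_top, if_false, EReal.toReal_coe] at h
    rw [← ENNReal.ofReal_coe_nnreal, ← ENNReal.ofReal_mul hγ0.le] at h
    exact (ENNReal.ofReal_lt_ofReal_iff ha0).1 h
  have hD' : Metric.infDist p.1 {x : X | f (x, ybar) ≤ 0} < a / γ := by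
    rw [lt_div_iff₀ hγ0]; linarith
  obtain ⟨u, hu, hdu⟩ := (Metric.infDist_lt_iff ⟨xbar, by simp [hf0]⟩).1 hD'
  have hu' : f (u, ybar) ≤ 0 := hu
  have hne : (u, ybar) ≠ p := by
    rintro rfl
    rw [ha] at hu'
    exact absurd hp2 (not_lt.2 hu')
  unfold nonlocalSlopeRho
  refine le_iSup₂_of_le (u, ybar) hne ?_
  have hdr : dRho ρ p (u, ybar) ≤ a / γ := by
    refine max_le hdu.le ?_
    calc ρ * dist p.2 ybar ≤ c / γ * dist p.2 ybar := by gcongr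
      _ = c * dist p.2 ybar / γ := by ring
      _ ≤ a / γ := by gcongr
  rw [max_eq_right hu', sub_zero, ha, EReal.toReal_coe, max_eq_left ha0.le]
  have h1 : (γ : ℝ≥0∞) = ENNReal.ofReal a / ENNReal.ofReal (a / γ) := by
    rw [← ENNReal.ofReal_div_of_pos (by positivity), ← ENNReal.ofReal_coe_nnreal]
    congr 1
    field_simp
  rw [h1]
  exact ENNReal.div_le_div_left (ENNReal.ofReal_le_ofReal hdr) _
end

section
/- Let X and Y be complete metric spaces, (x̄,ȳ) ∈ X×Y, and f : X×Y → ℝ∪{+∞} with f(x̄,ȳ)=0 satisfying (P1) and (P2). If f₊ is lower semicontinuous on a neighbourhood of (x̄,ȳ), then the error bound modulus equals the uniform strict outer slope: Er f(x̄,ȳ) = |∇f|^◇(x̄,ȳ). -/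
open Filter Metric Set Topology ENNReal

lemma ekeland_aux {Z : Type*} [MetricSpace Z] [CompleteSpace Z] (h : Z → ℝ)
    (h0 : ∀ z, 0 ≤ h z) (D : Z → Z → ℝ) (m : ℝ) (hm : 0 < m)
    (hD : ∀ a b, m * dist a b ≤ D a b) (tri : ∀ a b c, D a c ≤ D a b + D b c)
    (self : ∀ a, D a a = 0) (cont : ∀ a, Continuous (D a)) (z0 : Z)
    (hl : ∀ q, D z0 q ≤ h z0 → LowerSemicontinuousAt h q) :
    ∃ q, h q + D z0 q ≤ h z0 ∧ ∀ u, u ≠ q → h q < h u + D q u := by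
  have Dnn : ∀ a b, 0 ≤ D a b := fun a b => le_trans (by positivity) (hD a b)
  have step : ∀ (n : ℕ) (z : Z), ∃ w, h w + D z w ≤ h z ∧
      ∀ u, h u + D z u ≤ h z → h w ≤ h u + (1/2 : ℝ)^n := by
    intro n z
    let S := h '' {u | h u + D z u ≤ h z}
    have hne : S.Nonempty := ⟨h z, z, by simp [self], rfl⟩
    have hbd : BddBelow S := ⟨0, by rintro _ ⟨u, -, rfl⟩; exact h0 u⟩
    obtain ⟨_, ⟨w, hw, rfl⟩, hlt⟩ := exists_lt_of_csInf_lt hne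
      (show sInf S < sInf S + (1/2 : ℝ)^n by
        have : (0:ℝ) < (1/2 : ℝ)^n := by positivity
        linarith)
    refine ⟨w, hw, fun u hu => ?_⟩
    have : sInf S ≤ h u := csInf_le hbd ⟨u, hu, rfl⟩
    linarith
  choose nx hnx1 hnx2 using step
  let z : ℕ → Z := fun n => Nat.rec z0 (fun n w => nx n w) n
  have hz0 : z 0 = z0 := rfl
  have hzs : ∀ n, z (n+1) = nx n (z n) := fun n => rfl
  have htr : ∀ a b c, h b + D a b ≤ h a → h c + D b c ≤ h b → h c + D a c ≤ h a := by
    intro a b c h1 h2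
    have := tri a b c
    linarith
  have hmono : ∀ n k, h (z (n+k)) + D (z n) (z (n+k)) ≤ h (z n) := by
    intro n k
    induction k with
    | zero => simp [self]
    | succ k ih =>
      refine htr _ _ _ ih ?_
      rw [← add_assoc, hzs]
      exact hnx1 _ _
  have hanti : Antitone (fun n => h (z n)) := by
    intro a b hab
    obtain ⟨k, rfl⟩ := Nat.exists_eq_add_of_le hab
    have := hmono a k
    have := Dnn (z a) (z (a+k))
    simp only
    linarith
  have hsmall : ∀ n u, h u + D (z (n+1)) u ≤ h (z (n+1)) → D (z (n+1)) u ≤ (1/2 : ℝ)^n := by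
    intro n u hu
    have h1 : h u + D (z n) u ≤ h (z n) := htr _ _ _ (hmono n 1) hu
    have h2 := hnx2 n (z n) u h1
    rw [← hzs] at h2
    linarith
  have hpow : Tendsto (fun n : ℕ => (1/2 : ℝ)^n / m) atTop (𝓝 0) := by
    have := (tendsto_pow_atTop_nhds_zero_of_lt_one (r := (1/2:ℝ)) (by norm_num)
      (by norm_num)).div_const m
    simpa using this
  have hc : CauchySeq (fun n => z (n+1)) := by
    refine cauchySeq_of_le_tendsto_0' (fun n : ℕ => (1/2 : ℝ)^n / m) ?_ hpow
    intro a b hab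
    obtain ⟨k, rfl⟩ := Nat.exists_eq_add_of_le hab
    rw [le_div_iff₀ hm]
    have h1 := hmono (a+1) k
    have e : a + 1 + k = a + k + 1 := by ring
    rw [e] at h1
    have := hsmall a _ h1
    have := hD (z (a+1)) (z (a+k+1))
    linarith
  obtain ⟨q, hq⟩ := cauchySeq_tendsto_of_complete hc
  have hq' : Tendsto z atTop (𝓝 q) := (tendsto_add_atTop_iff_nat 1).1 hq
  have hDq : ∀ n, Tendsto (fun k => D (z n) (z k)) atTop (𝓝 (D (z n) q)) := fun n =>
    ((cont (z n)).tendsto q).comp hq'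
  have hlq : LowerSemicontinuousAt h q := by
    apply hl
    refine le_of_tendsto (hDq 0) (Eventually.of_forall fun k => ?_)
    have := hmono 0 k
    rw [Nat.zero_add] at this
    have := h0 (z k)
    simp only [hz0] at *
    linarith
  have hqA : ∀ n, h q + D (z n) q ≤ h (z n) := by
    intro n
    by_contra hcon
    push Not at hcon
    set e := (h q + D (z n) q - h (z n)) / 2 with he
    have hepos : 0 < e := by rw [he]; linarith
    have e1 := hq'.eventually (hlq (h q - e) (by linarith))
    have e2 := (hDq n).eventually (lt_mem_nhds (show D (z n) q - e < D (z n) q by linarith))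
    obtain ⟨k, ⟨k1, k2⟩, k3⟩ := ((e1.and e2).and (eventually_ge_atTop n)).exists
    obtain ⟨j, rfl⟩ := Nat.exists_eq_add_of_le k3
    have := hmono n j
    linarith
  refine ⟨q, hqA 0, fun u hu => ?_⟩
  by_contra hcon
  push Not at hcon
  apply hu
  have : Tendsto (fun n => z (n+1)) atTop (𝓝 u) := by
    rw [tendsto_iff_dist_tendsto_zero]
    refine squeeze_zero (fun _ => dist_nonneg) (fun n => ?_) hpow
    rw [le_div_iff₀ hm]
    have := hsmall n u (htr _ _ _ (hqA (n+1)) hcon)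
    have := hD (z (n+1)) u
    linarith
  exact tendsto_nhds_unique this hq

lemma small_aux (K b : ℝ) (hb : 0 < b) : ∀ᶠ δ in 𝓝[>] (0:ℝ), K * δ < b := by
  have : Tendsto (fun δ : ℝ => K * δ) (𝓝 0) (𝓝 (K * 0)) :=
    (continuous_const.mul continuous_id).tendsto 0
  rw [mul_zero] at this
  exact (this.mono_left nhdsWithin_le_nhds).eventually (gt_mem_nhds hb)

lemma dRho_pos {X Y : Type*} [MetricSpace X] [MetricSpace Y] {ρ : ℝ} (hρ : 0 < ρ)
    {p q : X × Y} (h : q ≠ p) : 0 < dRho ρ p q := by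
  unfold dRho
  by_cases h1 : p.1 = q.1
  · have h2 : p.2 ≠ q.2 := fun h2 => h (Prod.ext h1.symm h2.symm)
    exact lt_max_of_lt_right (mul_pos hρ (dist_pos.2 h2))
  · exact lt_max_of_lt_left (dist_pos.2 h1)

lemma er_le {X Y : Type*} [MetricSpace X] [MetricSpace Y]
    (xbar : X) (ybar : Y) (f : X × Y → EReal)
    (hf0 : f (xbar, ybar) = 0)
    (hP2 : ∃ c : ℝ, 0 < c ∧ ∃ ε : ℝ, 0 < ε ∧ ∀ p : X × Y,
      0 < f p → f p < (ε : EReal) → ((c * dist p.2 ybar : ℝ) : EReal) ≤ f p) :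
    errorBoundModulus f xbar ybar ≤ uniformStrictOuterSlope f xbar ybar := by
  obtain ⟨c, hc, ε, hε, hP2⟩ := hP2
  refine le_of_forall_lt_imp_le_of_dense ?_
  intro g hg
  lift g to NNReal using hg.ne_top
  rcases eq_or_ne g 0 with rfl | hg0
  · simp
  have hγ : (0:ℝ) < g := by positivity
  unfold errorBoundModulus at hg
  obtain ⟨δ, hg⟩ := lt_iSup_iff.1 hg
  obtain ⟨hδ, hg⟩ := lt_iSup_iff.1 hg
  unfold uniformStrictOuterSlope
  set ρ := min (min δ ε) (c / g) with hρdef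
  have hρ : 0 < ρ := by positivity
  refine le_iSup₂_of_le ρ hρ (le_iInf₂ ?_)
  rintro p ⟨hp1, hp2, hp3⟩
  have hρδ : ρ ≤ δ := (min_le_left _ _).trans (min_le_left _ _)
  have hρε : ρ ≤ ε := (min_le_left _ _).trans (min_le_right _ _)
  have hρc : ρ ≤ c / g := min_le_right _ _
  have hgp := hg.trans_le (iInf₂_le p ⟨hp1.trans_le hρδ, hp2⟩)
  have hd := hP2 p hp2 (hp3.trans_le (by exact_mod_cast hρε))
  have htop : f p ≠ ⊤ := ne_top_of_lt hp3
  have hbot : f p ≠ ⊥ := ne_bot_of_gt hp2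
  obtain ⟨F, hF⟩ : ∃ F : ℝ, f p = F := ⟨_, (EReal.coe_toReal htop hbot).symm⟩
  rw [hF] at hp2 hp3 hd
  have hF0 : 0 < F := by exact_mod_cast hp2
  have hd' : c * dist p.2 ybar ≤ F := by exact_mod_cast hd
  unfold ERealToENNReal at hgp
  rw [if_neg htop, hF, EReal.toReal_coe] at hgp
  have hinf : infDist p.1 {x : X | f (x, ybar) ≤ 0} < F / g := by
    rcases (infDist_nonneg (x := p.1) (s := {x : X | f (x, ybar) ≤ 0})).eq_or_lt with h | h
    · rw [← h]; positivity
    · rw [← ENNReal.ofReal_div_of_pos h, ← ENNReal.ofReal_coe_nnreal,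
        ENNReal.ofReal_lt_ofReal_iff_of_nonneg g.coe_nonneg] at hgp
      rw [lt_div_iff₀ h] at hgp
      rw [lt_div_iff₀ hγ]; linarith
  obtain ⟨x, hx, hxd⟩ := (infDist_lt_iff ⟨xbar, by simp [hf0]⟩).1 hinf
  have hqp : ((x, ybar) : X × Y) ≠ p := by
    rintro rfl
    rw [mem_setOf_eq, hF] at hx
    exact absurd hx (not_le.2 hp2)
  unfold nonlocalSlopeRho
  refine le_iSup₂_of_le (x, ybar) hqp ?_
  rw [max_eq_right (show f (x, ybar) ≤ 0 from hx), hF, sub_zero, EReal.toReal_coe,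
    max_eq_left hF0.le, ← ENNReal.ofReal_div_of_pos (dRho_pos hρ hqp),
    ← ENNReal.ofReal_coe_nnreal]
  apply ENNReal.ofReal_le_ofReal
  rw [le_div_iff₀ (dRho_pos hρ hqp), ← le_div_iff₀' hγ]
  unfold dRho
  refine max_le hxd.le ?_
  rw [le_div_iff₀ hγ]
  rw [le_div_iff₀ hγ] at hρc
  have : ρ * g * dist p.2 ybar ≤ c * dist p.2 ybar := by gcongr
  nlinarith

lemma le_er {X Y : Type*} [MetricSpace X] [MetricSpace Y]
    [CompleteSpace X] [CompleteSpace Y]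
    (xbar : X) (ybar : Y) (f : X × Y → EReal)
    (hf0 : f (xbar, ybar) = 0)
    (hP1 : ∀ p : X × Y, p.2 ≠ ybar → 0 < f p)
    (hP2 : ∃ c : ℝ, 0 < c ∧ ∃ ε : ℝ, 0 < ε ∧ ∀ p : X × Y,
      0 < f p → f p < (ε : EReal) → ((c * dist p.2 ybar : ℝ) : EReal) ≤ f p)
    (hlsc : ∃ U ∈ 𝓝 ((xbar, ybar) : X × Y),
      LowerSemicontinuousOn (fun p : X × Y => max (f p) 0) U) :
    uniformStrictOuterSlope f xbar ybar ≤ errorBoundModulus f xbar ybar := by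
  obtain ⟨c, hc, ε, hε, hP2⟩ := hP2
  obtain ⟨U, hU, hlsc⟩ := hlsc
  obtain ⟨r, hr, hrU⟩ := Metric.mem_nhds_iff.1 hU
  by_contra hcon
  push Not at hcon
  obtain ⟨g, hg1, hg2⟩ := ENNReal.lt_iff_exists_nnreal_btwn.1 hcon
  have hγ : (0:ℝ) < g := by
    have : (0:ℝ≥0∞) < g := pos_of_gt hg1
    exact_mod_cast this
  unfold uniformStrictOuterSlope at hg2
  obtain ⟨ρ, hg2⟩ := lt_iSup_iff.1 hg2
  obtain ⟨hρ, hg2⟩ := lt_iSup_iff.1 hg2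
  obtain ⟨δ, ⟨⟨⟨⟨⟨d1, d2⟩, d3⟩, d4⟩, d5⟩, hδ⟩⟩ :=
    ((((((small_aux g ρ hρ).and (small_aux g ε hε)).and (small_aux 2 ρ hρ)).and
      (small_aux 2 r hr)).and (small_aux (1/ρ + g/c) r hr)).and self_mem_nhdsWithin).exists
  have hδ : 0 < δ := hδ
  have hEr := (le_iSup₂ (f := fun (δ : ℝ) (_ : 0 < δ) => ⨅ (p : X × Y) (_ : dist p.1 xbar < δ ∧ 0 < f p),
      ERealToENNReal (f p) / ENNReal.ofReal (Metric.infDist p.1 {x : X | f (x, ybar) ≤ 0}))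
      δ hδ).trans_lt hg1
  obtain ⟨p, hEr⟩ := iInf_lt_iff.1 hEr
  obtain ⟨⟨hp1, hp2⟩, hEr⟩ := iInf_lt_iff.1 hEr
  set S := {x : X | f (x, ybar) ≤ 0} with hS
  have hxS : xbar ∈ S := by simp [hS, hf0]
  have htop : f p ≠ ⊤ := by
    intro h
    simp [ERealToENNReal, h, ENNReal.top_div] at hEr
  have hbot : f p ≠ ⊥ := ne_bot_of_gt hp2
  obtain ⟨F, hF⟩ : ∃ F : ℝ, f p = F := ⟨_, (EReal.coe_toReal htop hbot).symm⟩
  have hF0 : 0 < F := by rw [hF] at hp2; exact_mod_cast hp2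
  have hid : F < g * infDist p.1 S := by
    unfold ERealToENNReal at hEr
    rw [if_neg htop, hF, EReal.toReal_coe] at hEr
    rcases (infDist_nonneg (x := p.1) (s := S)).eq_or_lt with h | h
    · rw [← h, ENNReal.ofReal_zero, ENNReal.div_zero (by simpa using hF0)] at hEr
      exact absurd hEr not_top_lt
    · rw [← ENNReal.ofReal_div_of_pos h, ← ENNReal.ofReal_coe_nnreal,
        ENNReal.ofReal_lt_ofReal_iff hγ] at hEr
      rwa [div_lt_iff₀ h] at hEr
  have hid2 : infDist p.1 S ≤ dist p.1 xbar := infDist_le_dist_of_mem hxS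
  have hFδ : F < g * δ := by
    refine hid.trans ?_
    gcongr
    linarith
  have hpy : c * dist p.2 ybar ≤ F := by
    have := hP2 p hp2 (by rw [hF]; exact_mod_cast hFδ.trans d2)
    rw [hF] at this
    exact_mod_cast this
  -- truncated function
  set h : X × Y → ℝ := fun z => (min (max (f z) 0) ((F + 1 : ℝ) : EReal)).toReal with hh
  have hcoe : ∀ z, ((h z : ℝ) : EReal) = min (max (f z) 0) ((F + 1 : ℝ) : EReal) := by
    intro z
    apply EReal.coe_toReal
    · exact ne_top_of_le_ne_top (EReal.coe_ne_top _) (min_le_right _ _)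
    · refine ne_bot_of_gt (show ((-1 : ℝ) : EReal) < _ from ?_)
      refine lt_min (lt_max_of_lt_right ?_) ?_
      · exact_mod_cast (by norm_num : (-1:ℝ) < 0)
      · exact_mod_cast (by linarith : (-1:ℝ) < F + 1)
  have hnn : ∀ z, 0 ≤ h z := by
    intro z
    have : ((0:ℝ):EReal) ≤ h z := by
      rw [hcoe]
      refine le_min (le_max_right _ _) ?_
      exact_mod_cast (by linarith : (0:ℝ) ≤ F + 1)
    exact_mod_cast this
  have hfin : ∀ z, h z < F + 1 → max (f z) 0 = (h z : EReal) := by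
    intro z hz
    have hz' : (h z : EReal) < ((F + 1 : ℝ) : EReal) := by exact_mod_cast hz
    rw [hcoe] at hz' ⊢
    rcases min_lt_iff.1 hz' with h | h
    · rw [min_eq_left h.le]
    · exact absurd h (lt_irrefl _)
  have hle : ∀ z, (h z : EReal) ≤ max (f z) 0 := fun z => by rw [hcoe]; exact min_le_left _ _
  have hp : h p = F := by
    have : (h p : EReal) = F := by
      rw [hcoe, max_eq_left hp2.le, hF, min_eq_left]
      exact_mod_cast (by linarith : F ≤ F + 1)
    exact_mod_cast this
  have hdr : ∀ z, g * dRho ρ p z ≤ F → dist p.1 z.1 < δ ∧ dist p.2 z.2 < δ / ρ := by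
    intro z hz
    have h1 : dist p.1 z.1 ≤ dRho ρ p z := le_max_left _ _
    have h2 : ρ * dist p.2 z.2 ≤ dRho ρ p z := le_max_right _ _
    have h3 : dRho ρ p z < δ := lt_of_mul_lt_mul_left (hz.trans_lt hFδ) hγ.le
    refine ⟨by linarith, ?_⟩
    rw [lt_div_iff₀ hρ]; linarith
  obtain ⟨q, hq1, hq2⟩ := ekeland_aux h hnn (fun a b => g * dRho ρ a b) (g * min 1 ρ)
    (by positivity)
    (by
      intro a b
      rw [mul_assoc]
      refine mul_le_mul_of_nonneg_left ?_ hγ.le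
      rw [Prod.dist_eq, mul_max_of_nonneg _ _ (by positivity)]
      refine max_le_max ?_ ?_
      · calc min 1 ρ * dist a.1 b.1 ≤ 1 * dist a.1 b.1 := by gcongr; exact min_le_left _ _
          _ = _ := one_mul _
      · gcongr; exact min_le_right _ _)
    (by
      intro a b d
      rw [← mul_add]
      refine mul_le_mul_of_nonneg_left ?_ hγ.le
      unfold dRho
      refine max_le ?_ ?_
      · exact (dist_triangle _ b.1 _).trans (add_le_add (le_max_left _ _) (le_max_left _ _))
      · refine le_trans ?_ (add_le_add (le_max_right _ _) (le_max_right _ _))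
        rw [← mul_add]
        exact mul_le_mul_of_nonneg_left (dist_triangle _ b.2 _) hρ.le)
    (by intro a; simp [dRho])
    (by intro a; unfold dRho; fun_prop)
    p
    (by
      intro z hz
      rw [hp] at hz
      obtain ⟨z1, z2⟩ := hdr z hz
      have hzb : z ∈ ball ((xbar, ybar) : X × Y) r := by
        rw [mem_ball, Prod.dist_eq]
        refine max_lt ?_ ?_
        · have := dist_triangle_left z.1 xbar p.1
          simp only
          linarith
        · have := dist_triangle_left z.2 ybar p.2
          have h3 : dist p.2 ybar ≤ g * δ / c := by
            rw [le_div_iff₀ hc]; linarith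
          have e : (1/ρ + g/c) * δ = δ / ρ + g * δ / c := by ring
          simp only
          linarith
      have hzU : U ∈ 𝓝 z := mem_of_superset (isOpen_ball.mem_nhds hzb) hrU
      have hw := hlsc z (hrU hzb)
      intro y hy
      have hy' : (y : EReal) < h z := by exact_mod_cast hy
      rw [hcoe] at hy'
      have := hw y (hy'.trans_le (min_le_left _ _))
      rw [nhdsWithin_eq_nhds.2 hzU] at this
      filter_upwards [this] with u hu
      have : (y : EReal) < h u := by
        rw [hcoe]
        exact lt_min hu (hy'.trans_le (min_le_right _ _))
      exact_mod_cast this)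
  rw [hp] at hq1
  have hdpos : ∀ a b : X × Y, 0 ≤ dRho ρ a b := fun a b => le_max_of_le_left dist_nonneg
  have hqF : h q ≤ F := by have := mul_nonneg hγ.le (hdpos p q); linarith
  have hqd : g * dRho ρ p q ≤ F := by have := hnn q; linarith
  have hfq := hfin q (by linarith)
  have hfq0 : 0 < f q := by
    by_contra hneg
    have hy : q.2 = ybar := by
      by_contra hy
      exact hneg (hP1 q hy)
    have hqS : q.1 ∈ S := by
      rw [hS, mem_setOf_eq, ← hy]
      exact not_lt.1 hneg
    have h1 := infDist_le_dist_of_mem (x := p.1) hqS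
    have h2 : dist p.1 q.1 ≤ dRho ρ p q := le_max_left _ _
    have : g * infDist p.1 S ≤ g * dRho ρ p q := by gcongr; linarith
    linarith
  rw [max_eq_left hfq0.le] at hfq
  have hqx : dist q.1 xbar < ρ := by
    have := (hdr q hqd).1
    have := dist_triangle_left q.1 xbar p.1
    linarith
  have hsl := hg2.trans_le (iInf₂_le q ⟨hqx, hfq0, by
    rw [hfq]; exact_mod_cast (by linarith : h q < ρ)⟩)
  unfold nonlocalSlopeRho at hsl
  obtain ⟨u, hsl⟩ := lt_iSup_iff.1 hsl
  obtain ⟨huq, hsl⟩ := lt_iSup_iff.1 hsl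
  have hdp := dRho_pos hρ huq
  rw [← ENNReal.ofReal_div_of_pos hdp, ← ENNReal.ofReal_coe_nnreal,
    ENNReal.ofReal_lt_ofReal_iff_of_nonneg g.coe_nonneg, lt_div_iff₀ hdp] at hsl
  have hek := hq2 u huq
  have hgd := mul_pos hγ hdp
  rcases lt_max_iff.1 hsl with hsl | hsl
  · by_cases hut : f u = ⊤
    · rw [hut, hfq] at hsl
      simp at hsl
      linarith
    · have hm1 : max (f u) 0 ≠ ⊤ := by
        rw [ne_eq, max_eq_top]; simp [hut]
      have hm2 : max (f u) 0 ≠ ⊥ := ne_bot_of_le_ne_bot EReal.zero_ne_bot (le_max_right _ _)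
      obtain ⟨G, hG⟩ : ∃ G : ℝ, max (f u) 0 = G := ⟨_, (EReal.coe_toReal hm1 hm2).symm⟩
      have hGu : h u ≤ G := by
        have := hle u
        rw [hG] at this
        exact_mod_cast this
      rw [hG, hfq, ← EReal.coe_sub, EReal.toReal_coe] at hsl
      linarith
  · linarith

/-- Theorem 3T1 (ii): if `X` and `Y` are complete and `f₊` is lower semicontinuous on a
neighbourhood of `(x̄,ȳ)`, then the error bound modulus equals the uniform strict outer
slope: `Er f(x̄,ȳ) = |∇f|^◇(x̄,ȳ)`. -/
theorem errorBound_eq_uniformStrictSlope {X Y : Type*} [MetricSpace X] [MetricSpace Y]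
    [CompleteSpace X] [CompleteSpace Y]
    (xbar : X) (ybar : Y) (f : X × Y → EReal)
    (hfbot : ∀ p : X × Y, f p ≠ ⊥)
    (hf0 : f (xbar, ybar) = 0)
    (hP1 : ∀ p : X × Y, p.2 ≠ ybar → 0 < f p)
    (hP2 : ∃ c : ℝ, 0 < c ∧ ∃ ε : ℝ, 0 < ε ∧ ∀ p : X × Y,
      0 < f p → f p < (ε : EReal) → ((c * dist p.2 ybar : ℝ) : EReal) ≤ f p)
    (hlsc : ∃ U ∈ 𝓝 ((xbar, ybar) : X × Y),
      LowerSemicontinuousOn (fun p : X × Y => max (f p) 0) U) :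
    errorBoundModulus f xbar ybar = uniformStrictOuterSlope f xbar ybar := by
  exact le_antisymm (er_le xbar ybar f hf0 hP2) (le_er xbar ybar f hf0 hP1 hP2 hlsc)
end

section
/- Let X and Y be finite dimensional normed linear spaces, F : X ⇉ Y a set-valued mapping, (x̄,ȳ) ∈ gph F, and g : Y → [0,∞) satisfying the standing assumptions. Then the strict subdifferential g-slope of F at (x̄,ȳ) admits the coderivative representation |∂F|_g(x̄,ȳ) = inf{ ‖x*‖ : x* ∈ D̄^{*>}_g F(x̄,ȳ)(S*_{Y*}) }, where S*_{Y*} is the unit sphere of Y* and D̄^{*>}_g F(x̄,ȳ) is the limiting outer g-coderivative of F at (x̄,ȳ). -/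
open Filter Metric Set Topology ENNReal

/-- The graph of a set-valued mapping `F : X ⇉ Y`. -/
def svGraph {X Y : Type*} (F : X → Set Y) : Set (X × Y) := {p : X × Y | p.2 ∈ F p.1}

/-- The Fréchet normal cone to a subset `Ω` of a product of normed spaces (ε-form). -/
def prodNormalCone {X Y : Type*} [NormedAddCommGroup X] [NormedSpace ℝ X]
    [NormedAddCommGroup Y] [NormedSpace ℝ Y]
    (Ω : Set (X × Y)) (p : X × Y) : Set ((X →L[ℝ] ℝ) × (Y →L[ℝ] ℝ)) :=
  {s | p ∈ Ω ∧ ∀ ε : ℝ, 0 < ε → ∀ᶠ q : X × Y in 𝓝[Ω \ {p}] p,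
    s.1 (q.1 - p.1) + s.2 (q.2 - p.2) ≤ ε * ‖q - p‖}

/-- The Fréchet subdifferential of a real-valued function (ε-form). -/
def fSubdiff {Y : Type*} [NormedAddCommGroup Y] [NormedSpace ℝ Y]
    (g : Y → ℝ) (y : Y) : Set (Y →L[ℝ] ℝ) :=
  {ys | ∀ ε : ℝ, 0 < ε → ∀ᶠ v in 𝓝 y, g y + ys (v - y) - ε * ‖v - y‖ ≤ g v}

/-- The subdifferential (g,ρ)-slope
`|∂F|_{g,ρ}(x,y) = inf{‖x*‖ : x* ∈ D*F(x,y)(∂g(y)+ρB*)}`. -/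
noncomputable def subdiffGSlopeRho {X Y : Type*} [NormedAddCommGroup X] [NormedSpace ℝ X]
    [NormedAddCommGroup Y] [NormedSpace ℝ Y]
    (F : X → Set Y) (g : Y → ℝ) (ρ : ℝ) (p : X × Y) : ℝ≥0∞ :=
  ⨅ (xs : X →L[ℝ] ℝ) (_ : ∃ ys vs : Y →L[ℝ] ℝ, vs ∈ fSubdiff g p.2 ∧ ‖ys - vs‖ ≤ ρ ∧
      (xs, -ys) ∈ prodNormalCone (svGraph F) p),
    ENNReal.ofReal ‖xs‖

/-- The strict subdifferential g-slope `|∂F|_g(x̄,ȳ)`. -/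
noncomputable def strictSubdiffGSlope {X Y : Type*} [NormedAddCommGroup X] [NormedSpace ℝ X]
    [NormedAddCommGroup Y] [NormedSpace ℝ Y]
    (F : X → Set Y) (g : Y → ℝ) (xbar : X) (ybar : Y) : ℝ≥0∞ :=
  ⨆ (ρ : ℝ) (_ : 0 < ρ),
    ⨅ (p : X × Y) (_ : p ∈ svGraph F ∧ ybar ∉ F p.1 ∧
        dist p.1 xbar < ρ ∧ dist p.2 ybar < ρ),
      subdiffGSlopeRho F g ρ p

/-- The graph of the limiting outer g-coderivative `D̄^{*>}_g F(x̄,ȳ)`: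
`(y*,x*)` belongs to the graph iff there exist sequences `(x_k,y_k) ∈ gph F` with
`x_k ∉ F⁻¹(ȳ)`, `x*_k ∈ D*F(x_k,y_k)(y*_k)`, `v*_k ∈ ∂g(y_k)`, such that
`(x_k,y_k) → (x̄,ȳ)`, `y*_k − v*_k → 0`, `‖y*‖·x*_k → x*`, and, if `y* ≠ 0`, either
`y*_k ≠ 0` for all `k` and `y*_k/‖y*_k‖ → y*/‖y*‖`, or `y*_k = 0` for all `k`. -/
def limOuterGCoderivGraph {X Y : Type*} [NormedAddCommGroup X] [NormedSpace ℝ X]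
    [NormedAddCommGroup Y] [NormedSpace ℝ Y]
    (F : X → Set Y) (g : Y → ℝ) (xbar : X) (ybar : Y) :
    Set ((Y →L[ℝ] ℝ) × (X →L[ℝ] ℝ)) :=
  {s | ∃ (x : ℕ → X) (y : ℕ → Y) (xs : ℕ → X →L[ℝ] ℝ) (ys : ℕ → Y →L[ℝ] ℝ)
      (vs : ℕ → Y →L[ℝ] ℝ),
    (∀ k : ℕ, (x k, y k) ∈ svGraph F ∧ ybar ∉ F (x k) ∧
      (xs k, -(ys k)) ∈ prodNormalCone (svGraph F) (x k, y k) ∧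
      vs k ∈ fSubdiff g (y k)) ∧
    Filter.Tendsto (fun k => ((x k, y k) : X × Y)) Filter.atTop (𝓝 (xbar, ybar)) ∧
    Filter.Tendsto (fun k => ys k - vs k) Filter.atTop (𝓝 0) ∧
    Filter.Tendsto (fun k => ‖s.1‖ • xs k) Filter.atTop (𝓝 s.2) ∧
    (s.1 ≠ 0 →
      ((∀ k : ℕ, ys k ≠ 0) ∧
        Filter.Tendsto (fun k => ‖ys k‖⁻¹ • ys k) Filter.atTop (𝓝 (‖s.1‖⁻¹ • s.1))) ∨
      (∀ k : ℕ, ys k = 0))}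

/-- Proposition `ows` (i): in finite dimensions, the strict subdifferential g-slope
admits the representation
`|∂F|_g(x̄,ȳ) = inf{‖x*‖ : x* ∈ D̄^{*>}_g F(x̄,ȳ)(S*_{Y*})}`. -/
theorem strictSubdiffGSlope_eq_coderiv {X Y : Type*}
    [NormedAddCommGroup X] [NormedSpace ℝ X] [FiniteDimensional ℝ X]
    [NormedAddCommGroup Y] [NormedSpace ℝ Y] [FiniteDimensional ℝ Y]
    (F : X → Set Y) (xbar : X) (ybar : Y) (g : Y → ℝ)
    (hgraph : ybar ∈ F xbar)
    (hg0 : g ybar = 0)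
    (hgnonneg : ∀ y : Y, 0 ≤ g y)
    (hgcont : ContinuousAt g ybar)
    (hgLip : ∀ y : Y, y ≠ ybar → ∃ (K : NNReal) (ε : ℝ), 0 < ε ∧
      LipschitzOnWith K g (Metric.ball y ε))
    (hP1 : ∀ y : Y, y ≠ ybar → 0 < g y)
    (hP2 : ∃ c : ℝ, 0 < c ∧ ∃ ε : ℝ, 0 < ε ∧ ∀ y : Y,
      0 < g y → g y < ε → c * dist y ybar ≤ g y) :
    strictSubdiffGSlope F g xbar ybar =
      ⨅ (xs : X →L[ℝ] ℝ) (_ : ∃ ys : Y →L[ℝ] ℝ, ‖ys‖ = 1 ∧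
          (ys, xs) ∈ limOuterGCoderivGraph F g xbar ybar),
        ENNReal.ofReal ‖xs‖ := by
  apply le_antisymm
  · refine le_iInf₂ fun xs hxs => ?_
    obtain ⟨ys, hys, x, y, xk, yk, vk, hk, hlim, hyv, hx, -⟩ := hxs
    simp only [hys, one_smul] at hx
    refine iSup₂_le fun ρ hρ => ?_
    have hn : Tendsto (fun k => ENNReal.ofReal ‖xk k‖) atTop (𝓝 (ENNReal.ofReal ‖xs‖)) :=
      (ENNReal.continuous_ofReal.tendsto _).comp hx.norm
    refine ge_of_tendsto hn ?_
    have h1 : ∀ᶠ k in atTop, dist (x k, y k) (xbar, ybar) < ρ :=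
      hlim.eventually (Metric.ball_mem_nhds _ hρ)
    have h2 : ∀ᶠ k in atTop, dist (yk k - vk k) 0 < ρ :=
      hyv.eventually (Metric.ball_mem_nhds _ hρ)
    filter_upwards [h1, h2] with k h1 h2
    rw [Prod.dist_eq, max_lt_iff] at h1
    rw [dist_zero_right] at h2
    obtain ⟨ha, hb, hc, hd⟩ := hk k
    refine iInf₂_le_of_le (x k, y k) ⟨ha, hb, h1.1, h1.2⟩ ?_
    exact iInf₂_le_of_le (xk k) ⟨yk k, vk k, hd, h2.le, hc⟩ le_rfl
  · refine le_of_forall_gt_imp_ge_of_dense fun c' hc' => ?_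
    obtain ⟨c, hc, hcc⟩ := exists_between hc'
    refine le_trans ?_ hcc.le
    have hctop : c ≠ ⊤ := hcc.ne_top
    have key : ∀ k : ℕ, ∃ (x : X) (y : Y) (xs : X →L[ℝ] ℝ) (ys vs : Y →L[ℝ] ℝ),
        ((x, y) ∈ svGraph F ∧ ybar ∉ F x ∧
          (xs, -ys) ∈ prodNormalCone (svGraph F) (x, y) ∧ vs ∈ fSubdiff g y) ∧
        dist x xbar < 1 / ((k : ℝ) + 1) ∧ dist y ybar < 1 / ((k : ℝ) + 1) ∧
        ‖ys - vs‖ ≤ 1 / ((k : ℝ) + 1) ∧ ‖xs‖ ≤ c.toReal := by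
      intro k
      have hρ : (0 : ℝ) < 1 / ((k : ℝ) + 1) := by positivity
      have h := lt_of_le_of_lt (le_iSup₂ (f := fun (ρ : ℝ) (_ : 0 < ρ) =>
        ⨅ (p : X × Y) (_ : p ∈ svGraph F ∧ ybar ∉ F p.1 ∧
          dist p.1 xbar < ρ ∧ dist p.2 ybar < ρ), subdiffGSlopeRho F g ρ p) _ hρ) hc
      simp only [subdiffGSlopeRho, iInf_lt_iff] at h
      obtain ⟨p, ⟨h1, h2, h3, h4⟩, xs, ⟨ys, vs, h5, h6, h7⟩, h8⟩ := h
      exact ⟨p.1, p.2, xs, ys, vs, ⟨h1, h2, h7, h5⟩, h3, h4, h6,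
        (ENNReal.ofReal_le_iff_le_toReal hctop).1 h8.le⟩
    choose x y xk yk vk hk hx hy hyv hb using key
    have hne : y 0 ≠ ybar := fun h => (hk 0).2.1 (h ▸ (hk 0).1)
    haveI : Nontrivial Y := ⟨_, _, hne⟩
    haveI : Nontrivial (Y →L[ℝ] ℝ) := inferInstance
    haveI : ProperSpace (Y →L[ℝ] ℝ) := FiniteDimensional.proper ℝ _
    haveI : ProperSpace (X →L[ℝ] ℝ) := FiniteDimensional.proper ℝ _
    have hφ : ∃ (φ : ℕ → ℕ) (u : Y →L[ℝ] ℝ), StrictMono φ ∧ ‖u‖ = 1 ∧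
        (((∀ k, yk (φ k) ≠ 0) ∧
          Tendsto (fun k => ‖yk (φ k)‖⁻¹ • yk (φ k)) atTop (𝓝 u)) ∨ ∀ k, yk (φ k) = 0) := by
      by_cases hf : ∃ᶠ k in atTop, yk k = 0
      · obtain ⟨φ, hφ, h0⟩ := extraction_of_frequently_atTop hf
        obtain ⟨u, hu⟩ := exists_norm_eq (Y →L[ℝ] ℝ) (zero_le_one (α := ℝ))
        exact ⟨φ, u, hφ, hu, Or.inr h0⟩
      · obtain ⟨φ, hφ, h0⟩ := extraction_of_eventually_atTop (not_frequently.1 hf)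
        obtain ⟨u, hu, ψ, hψ, hlim⟩ :=
          (isCompact_sphere (0 : Y →L[ℝ] ℝ) 1).tendsto_subseq
            (x := fun k => ‖yk (φ k)‖⁻¹ • yk (φ k)) (fun k => by
              rw [mem_sphere_zero_iff_norm, norm_smul, norm_inv, norm_norm,
                inv_mul_cancel₀ (norm_ne_zero_iff.2 (h0 k))])
        exact ⟨φ ∘ ψ, u, hφ.comp hψ, mem_sphere_zero_iff_norm.1 hu,
          Or.inl ⟨fun k => h0 _, hlim⟩⟩
    obtain ⟨φ, u, hφ, hu, hφu⟩ := hφ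
    obtain ⟨xs, hxs, ψ, hψ, hlim⟩ :=
      (isCompact_closedBall (0 : X →L[ℝ] ℝ) c.toReal).tendsto_subseq
        (x := fun k => xk (φ k)) (fun k => mem_closedBall_zero_iff.2 (hb _))
    have hθ : Tendsto (fun k => φ (ψ k)) atTop atTop := (hφ.comp hψ).tendsto_atTop
    have h0 := tendsto_one_div_add_atTop_nhds_zero_nat (𝕜 := ℝ)
    refine iInf₂_le_of_le xs ⟨u, hu, fun k => x (φ (ψ k)), fun k => y (φ (ψ k)),
      fun k => xk (φ (ψ k)), fun k => yk (φ (ψ k)), fun k => vk (φ (ψ k)),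
      fun k => hk _, ?_, ?_, ?_, ?_⟩ ?_
    · have hx' : Tendsto x atTop (𝓝 xbar) := tendsto_iff_dist_tendsto_zero.2
        (squeeze_zero (fun _ => dist_nonneg) (fun k => (hx k).le) h0)
      have hy' : Tendsto y atTop (𝓝 ybar) := tendsto_iff_dist_tendsto_zero.2
        (squeeze_zero (fun _ => dist_nonneg) (fun k => (hy k).le) h0)
      exact (hx'.prodMk_nhds hy').comp hθ
    · exact (squeeze_zero_norm hyv h0).comp hθ
    · simp only [hu, one_smul]
      exact hlim
    · intro _
      simp only [hu, inv_one, one_smul]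
      rcases hφu with ⟨h1, h2⟩ | h1
      · exact Or.inl ⟨fun k => h1 _, h2.comp hψ.tendsto_atTop⟩
      · exact Or.inr fun k => h1 _
    · exact (ENNReal.ofReal_le_iff_le_toReal hctop).2 (mem_closedBall_zero_iff.1 hxs)
end

section
/- Let X and Y be metric spaces, F : X ⇉ Y a set-valued mapping, (x̄,ȳ) ∈ gph F, φ : [0,∞) → [0,∞) continuously differentiable with φ(0)=0 and φ'(t)>0 for all t≥0, and g(y) := φ(d(y,ȳ)). Then for every ρ>0 and every (x,y) ∈ gph F with y ≠ ȳ, the (g,ρ)-slope of F factorizes as |∇F|_{g,ρ}(x,y) = φ'(d(y,ȳ)) · |∇F|_ρ(x,y). -/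
open Filter Metric Set Topology ENNReal

/-- The (g,ρ)-slope `|∇F|_{g,ρ}(x,y)` of `F` at `p = (x,y) ∈ gph F`. -/
noncomputable def gSlopeRho {X Y : Type*} [MetricSpace X] [MetricSpace Y]
    (F : X → Set Y) (g : Y → ℝ) (ρ : ℝ) (p : X × Y) : ℝ≥0∞ :=
  Filter.limsup
    (fun q => ENNReal.ofReal (max (g p.2 - g q.2) 0) / ENNReal.ofReal (dRho ρ q p))
    (𝓝[svGraph F \ {p}] p)

/-- The ρ-slope `|∇F|_ρ(x,y)` of `F` at `p = (x,y) ∈ gph F` (the case `g = d(·,ȳ)`). -/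
noncomputable def slopeRhoF {X Y : Type*} [MetricSpace X] [MetricSpace Y]
    (F : X → Set Y) (ybar : Y) (ρ : ℝ) (p : X × Y) : ℝ≥0∞ :=
  Filter.limsup
    (fun q => ENNReal.ofReal (max (dist p.2 ybar - dist q.2 ybar) 0) /
      ENNReal.ofReal (dRho ρ q p))
    (𝓝[svGraph F \ {p}] p)

/-- Proposition 6P0: for `g = φ∘d(·,ȳ)`, the (g,ρ)-slope of `F` factorizes as
`|∇F|_{g,ρ}(x,y) = φ'(d(y,ȳ))·|∇F|_ρ(x,y)` whenever `(x,y) ∈ gph F` and `y ≠ ȳ`. -/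
theorem gSlope_eq_deriv_mul_slope {X Y : Type*} [MetricSpace X] [MetricSpace Y]
    (F : X → Set Y) (xbar : X) (ybar : Y)
    (hgraph : ybar ∈ F xbar)
    (φ φ' : ℝ → ℝ) (D : EReal)
    (hφ0 : φ 0 = 0)
    (hφnonneg : ∀ t : ℝ, 0 ≤ t → 0 ≤ φ t)
    (hφc0 : ContinuousWithinAt φ (Set.Ici 0) 0)
    (hderiv : ∀ t : ℝ, 0 < t → HasDerivAt φ (φ' t) t)
    (hφ'pos : ∀ t : ℝ, 0 < t → 0 < φ' t)
    (hφ'cont : ContinuousOn φ' (Set.Ioi 0))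
    (hD : Filter.Tendsto (fun t : ℝ => ((φ' t : ℝ) : EReal)) (𝓝[>] (0:ℝ)) (𝓝 D))
    (hDpos : 0 < D)
    (ρ : ℝ) (hρ : 0 < ρ) (p : X × Y) (hp : p ∈ svGraph F) (hy : p.2 ≠ ybar) :
    gSlopeRho F (fun y => φ (dist y ybar)) ρ p =
      ENNReal.ofReal (φ' (dist p.2 ybar)) * slopeRhoF F ybar ρ p := by
  set s := dist p.2 ybar with hs
  have hs0 : 0 < s := dist_pos.mpr hy
  have ha := hφ'pos s hs0
  set a := φ' s with ha'
  have key : ∀ ε : ℝ, 0 < ε → ε < a → ∀ᶠ q in 𝓝[svGraph F \ {p}] p,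
      (a - ε) * max (s - dist q.2 ybar) 0 ≤ max (φ s - φ (dist q.2 ybar)) 0 ∧
      max (φ s - φ (dist q.2 ybar)) 0 ≤ (a + ε) * max (s - dist q.2 ybar) 0 := by
    intro ε hε hεa
    have h1 := (hasDerivAt_iff_isLittleO.mp (hderiv s hs0)).def hε
    have hc : Tendsto (fun q : X × Y => dist q.2 ybar) (𝓝[svGraph F \ {p}] p) (𝓝 s) := by
      have : Continuous (fun q : X × Y => dist q.2 ybar) := by fun_prop
      exact (this.tendsto p).mono_left nhdsWithin_le_nhds
    filter_upwards [hc.eventually h1] with q hq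
    generalize dist q.2 ybar = t at hq
    rw [Real.norm_eq_abs, Real.norm_eq_abs, smul_eq_mul, ← ha', abs_le] at hq
    obtain ⟨h2, h3⟩ := hq
    rcases le_total t s with hts | hts
    · rw [abs_of_nonpos (by linarith)] at h2 h3
      have h4 : 0 ≤ (a - ε) * (s - t) := mul_nonneg (by linarith) (by linarith)
      rw [max_eq_left (by linarith : 0 ≤ s - t),
        max_eq_left (by nlinarith : 0 ≤ φ s - φ t)]
      constructor <;> nlinarith
    · rw [abs_of_nonneg (by linarith)] at h2 h3
      have h4 : 0 ≤ (a - ε) * (t - s) := mul_nonneg (by linarith) (by linarith)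
      rw [max_eq_right (by linarith : s - t ≤ 0),
        max_eq_right (by nlinarith : φ s - φ t ≤ 0)]
      simp
  have hsmall : ∀ᶠ ε : ℝ in 𝓝[>] 0, 0 < ε ∧ ε < a := by
    filter_upwards [Ioo_mem_nhdsGT ha] with ε hε using hε
  have hne : ENNReal.ofReal a ≠ 0 := by simpa using ha
  have lim1 : Tendsto (fun ε : ℝ => ENNReal.ofReal (a - ε) * slopeRhoF F ybar ρ p) (𝓝[>] 0)
      (𝓝 (ENNReal.ofReal a * slopeRhoF F ybar ρ p)) := by
    refine ENNReal.Tendsto.mul_const ?_ (Or.inl hne)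
    refine ENNReal.tendsto_ofReal ?_
    have : Continuous (fun ε : ℝ => a - ε) := by fun_prop
    simpa using (this.tendsto 0).mono_left (nhdsWithin_le_nhds (s := Ioi 0))
  have lim2 : Tendsto (fun ε : ℝ => ENNReal.ofReal (a + ε) * slopeRhoF F ybar ρ p) (𝓝[>] 0)
      (𝓝 (ENNReal.ofReal a * slopeRhoF F ybar ρ p)) := by
    refine ENNReal.Tendsto.mul_const ?_ (Or.inl hne)
    refine ENNReal.tendsto_ofReal ?_
    have : Continuous (fun ε : ℝ => a + ε) := by fun_prop
    simpa using (this.tendsto 0).mono_left (nhdsWithin_le_nhds (s := Ioi 0))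
  apply le_antisymm
  · refine ge_of_tendsto lim2 ?_
    filter_upwards [hsmall] with ε hε
    unfold gSlopeRho slopeRhoF
    rw [← ENNReal.limsup_const_mul_of_ne_top ENNReal.ofReal_ne_top]
    refine limsup_le_limsup ?_
    filter_upwards [key ε hε.1 hε.2] with q hq
    rw [← mul_div_assoc, ← ENNReal.ofReal_mul (by linarith)]
    exact ENNReal.div_le_div_right (ENNReal.ofReal_le_ofReal hq.2) _
  · refine le_of_tendsto lim1 ?_
    filter_upwards [hsmall] with ε hε
    unfold gSlopeRho slopeRhoF
    rw [← ENNReal.limsup_const_mul_of_ne_top ENNReal.ofReal_ne_top]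
    refine limsup_le_limsup ?_
    filter_upwards [key ε hε.1 hε.2] with q hq
    rw [← mul_div_assoc, ← ENNReal.ofReal_mul (by linarith)]
    exact ENNReal.div_le_div_right (ENNReal.ofReal_le_ofReal hq.1) _
end

section
/- Let Y be a normed linear space, ȳ ∈ Y, φ : [0,∞) → [0,∞) continuously differentiable with φ(0)=0 and φ'(t)>0 for all t≥0, and g(y) := φ(‖y−ȳ‖). Then for every y ≠ ȳ, the Fréchet subdifferential of g is ∂g(y) = φ'(‖y−ȳ‖)·J(y−ȳ), where J is the normalized duality mapping. -/
open Filter Metric Set Topology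

/-- The normalized duality mapping `J(u) = {u* : ‖u*‖ = 1, ⟨u*,u⟩ = ‖u‖}`. -/
def dualityMap {Y : Type*} [NormedAddCommGroup Y] [NormedSpace ℝ Y]
    (u : Y) : Set (Y →L[ℝ] ℝ) :=
  {us | ‖us‖ = 1 ∧ us u = ‖u‖}

/-- Proposition 6P1 (i): for `g = φ∘‖·−ȳ‖` and `y ≠ ȳ`,
`∂g(y) = φ'(‖y−ȳ‖)·J(y−ȳ)`. -/
theorem fSubdiff_phi_norm {Y : Type*} [NormedAddCommGroup Y] [NormedSpace ℝ Y]
    (ybar : Y) (φ φ' : ℝ → ℝ) (D : EReal)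
    (hφ0 : φ 0 = 0)
    (hφnonneg : ∀ t : ℝ, 0 ≤ t → 0 ≤ φ t)
    (hφc0 : ContinuousWithinAt φ (Set.Ici 0) 0)
    (hderiv : ∀ t : ℝ, 0 < t → HasDerivAt φ (φ' t) t)
    (hφ'pos : ∀ t : ℝ, 0 < t → 0 < φ' t)
    (hφ'cont : ContinuousOn φ' (Set.Ioi 0))
    (hD : Filter.Tendsto (fun t : ℝ => ((φ' t : ℝ) : EReal)) (𝓝[>] (0:ℝ)) (𝓝 D))
    (hDpos : 0 < D)
    (y : Y) (hy : y ≠ ybar) :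
    fSubdiff (fun v => φ ‖v - ybar‖) y =
      (fun us : Y →L[ℝ] ℝ => φ' ‖y - ybar‖ • us) '' dualityMap (y - ybar) := by
  have hr : 0 < ‖y - ybar‖ := norm_pos_iff.mpr (sub_ne_zero.mpr hy)
  have hc := hφ'pos _ hr
  have key : ∀ ε : ℝ, 0 < ε → ∀ᶠ v in 𝓝 y,
      |φ ‖v - ybar‖ - φ ‖y - ybar‖ - (‖v - ybar‖ - ‖y - ybar‖) * φ' ‖y - ybar‖|
        ≤ ε * ‖v - y‖ := by
    intro ε hε
    have h1 := (hasDerivAt_iff_isLittleO.mp (hderiv _ hr)).def hε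
    have h2 : Tendsto (fun v : Y => ‖v - ybar‖) (𝓝 y) (𝓝 ‖y - ybar‖) :=
      (continuous_norm.comp (continuous_id.sub continuous_const)).tendsto y
    filter_upwards [h2.eventually h1] with v hv
    simp only [Real.norm_eq_abs, smul_eq_mul] at hv
    refine hv.trans (mul_le_mul_of_nonneg_left ?_ hε.le)
    have := abs_norm_sub_norm_le (v - ybar) (y - ybar)
    rwa [sub_sub_sub_cancel_right] at this
  generalize hcdef : φ' ‖y - ybar‖ = c at *
  ext ys
  simp only [fSubdiff, dualityMap, mem_setOf_eq, mem_image]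
  constructor
  · intro h
    have main : ∀ k : Y, ys k ≤ c * (‖y - ybar + k‖ - ‖y - ybar‖) := by
      intro k
      have main2 : ∀ ε : ℝ, 0 < ε → ys k ≤ c * (‖y - ybar + k‖ - ‖y - ybar‖) + ε * (2 * ‖k‖) := by
        intro ε hε
        have ht : Tendsto (fun s : ℝ => y + s • k) (𝓝[>] 0) (𝓝 y) := by
          have : Continuous (fun s : ℝ => y + s • k) := by fun_prop
          have h3 := this.tendsto 0
          simp only [zero_smul, add_zero] at h3
          exact h3.mono_left nhdsWithin_le_nhds
        have e1 := ht.eventually ((h ε hε).and (key ε hε))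
        have e2 : ∀ᶠ s : ℝ in 𝓝[>] 0, s ∈ Ioo (0:ℝ) 1 := Ioo_mem_nhdsGT one_pos
        obtain ⟨s, ⟨ha, hb⟩, hs0, hs1⟩ := (e1.and e2).exists
        have hb' := (abs_le.mp hb).2
        simp only [add_sub_cancel_left, map_smul, smul_eq_mul, norm_smul, Real.norm_eq_abs,
          abs_of_pos hs0] at ha hb'
        have hconv : ‖y + s • k - ybar‖ ≤ (1 - s) * ‖y - ybar‖ + s * ‖y - ybar + k‖ := by
          have : y + s • k - ybar = (1 - s) • (y - ybar) + s • (y - ybar + k) := by module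
          rw [this]
          refine (norm_add_le _ _).trans ?_
          rw [norm_smul, norm_smul, Real.norm_eq_abs, Real.norm_eq_abs, abs_of_pos hs0,
            abs_of_pos (sub_pos.mpr hs1)]
        have h5 := mul_le_mul_of_nonneg_right hconv hc.le
        refine le_of_mul_le_mul_left ?_ hs0
        linarith
      refine le_of_forall_pos_le_add fun δ hδ => ?_
      have hk : 0 < 2 * ‖k‖ + 1 := by positivity
      have h6 := main2 (δ / (2 * ‖k‖ + 1)) (by positivity)
      have h7 : δ / (2 * ‖k‖ + 1) * (2 * ‖k‖) ≤ δ := by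
        rw [div_mul_eq_mul_div, div_le_iff₀ hk]
        nlinarith
      linarith
    have hle : ∀ k : Y, ys k ≤ c * ‖k‖ := fun k =>
      (main k).trans (mul_le_mul_of_nonneg_left (by linarith [norm_add_le (y - ybar) k]) hc.le)
    have hn : ‖ys‖ ≤ c := by
      refine ys.opNorm_le_bound hc.le fun k => ?_
      rw [Real.norm_eq_abs, abs_le]
      have h8 := hle (-k)
      rw [map_neg, norm_neg] at h8
      exact ⟨by linarith, hle k⟩
    have hu : ys (y - ybar) = c * ‖y - ybar‖ := by
      refine le_antisymm (hle _) ?_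
      have h9 := main (-(y - ybar))
      rw [map_neg, add_neg_cancel, norm_zero] at h9
      linarith
    have hn2 : ‖ys‖ = c := by
      refine le_antisymm hn ?_
      have h10 := (le_abs_self _).trans (ys.le_opNorm (y - ybar))
      rw [hu] at h10
      exact le_of_mul_le_mul_right h10 hr
    refine ⟨c⁻¹ • ys, ⟨?_, ?_⟩, ?_⟩
    · rw [norm_smul, hn2, Real.norm_eq_abs, abs_of_pos (inv_pos.mpr hc), inv_mul_cancel₀ hc.ne']
    · rw [ContinuousLinearMap.smul_apply, hu, smul_eq_mul, inv_mul_cancel_left₀ hc.ne']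
    · rw [smul_smul, mul_inv_cancel₀ hc.ne', one_smul]
  · rintro ⟨us, ⟨hus1, hus2⟩, rfl⟩ ε hε
    filter_upwards [key ε hε] with v hv
    have h1 := (abs_le.mp hv).1
    have h2 := (le_abs_self _).trans (us.le_opNorm (v - ybar))
    rw [hus1, one_mul] at h2
    have h3 : us (v - y) = us (v - ybar) - us (y - ybar) := by
      rw [← map_sub, sub_sub_sub_cancel_right]
    have h4 : us (v - y) ≤ ‖v - ybar‖ - ‖y - ybar‖ := by rw [h3, hus2]; linarith
    have h5 := mul_le_mul_of_nonneg_right h4 hc.le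
    rw [ContinuousLinearMap.smul_apply, smul_eq_mul]
    linarith
end

section
/- Let X and Y be normed linear spaces, F : X ⇉ Y a set-valued mapping, (x̄,ȳ) ∈ gph F, φ : [0,∞) → [0,∞) continuously differentiable with φ(0)=0 and φ'(t)>0 for all t≥0, and g(y) := φ(‖y−ȳ‖). Then for every ρ>0 and every (x,y) ∈ gph F with y ≠ ȳ, the subdifferential (g,ρ)-slope of F factorizes as |∂F|_{g,ρ}(x,y) = φ'(‖y−ȳ‖) · |∂F|_{ξ_φ(y)ρ}(x,y), where ξ_φ(y) := 1/φ'(‖y−ȳ‖). -/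
open Filter Metric Set Topology ENNReal

/-- The subdifferential ρ-slope of `F`:
`|∂F|_ρ(x,y) = inf{‖x*‖ : x* ∈ D*F(x,y)(J(y−ȳ)+ρB*)}`. -/
noncomputable def subdiffSlopeJ {X Y : Type*} [NormedAddCommGroup X] [NormedSpace ℝ X]
    [NormedAddCommGroup Y] [NormedSpace ℝ Y]
    (F : X → Set Y) (ybar : Y) (ρ : ℝ) (p : X × Y) : ℝ≥0∞ :=
  ⨅ (xs : X →L[ℝ] ℝ) (_ : ∃ ys us : Y →L[ℝ] ℝ, us ∈ dualityMap (p.2 - ybar) ∧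
      ‖ys - us‖ ≤ ρ ∧ (xs, -ys) ∈ prodNormalCone (svGraph F) p),
    ENNReal.ofReal ‖xs‖

theorem aux_norm {Y : Type*} [NormedAddCommGroup Y] [NormedSpace ℝ Y] (c : ℝ) (hc : 0 < c)
    (a b : Y →L[ℝ] ℝ) : ‖c • a - c • b‖ = c * ‖a - b‖ := by
  have h : c • a - c • b = c • (a - b) := by
    ext z
    simp [mul_sub]
  rw [h, norm_smul, Real.norm_eq_abs, abs_of_pos hc]

theorem aux_cone {X Y : Type*} [NormedAddCommGroup X] [NormedSpace ℝ X]
    [NormedAddCommGroup Y] [NormedSpace ℝ Y]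
    (Ω : Set (X × Y)) (p : X × Y) (xs : X →L[ℝ] ℝ) (ys : Y →L[ℝ] ℝ) (a : ℝ) (ha : 0 < a)
    (h : (xs, -ys) ∈ prodNormalCone Ω p) : (a • xs, -(a • ys)) ∈ prodNormalCone Ω p := by
  refine ⟨h.1, fun ε hε => ?_⟩
  filter_upwards [h.2 (a⁻¹ * ε) (by positivity)] with q hq
  have h2 := mul_le_mul_of_nonneg_left hq ha.le
  have h3 : a * (a⁻¹ * ε * ‖q - p‖) = ε * ‖q - p‖ := by field_simp
  rw [h3] at h2
  simp only [neg_apply, smul_apply, smul_eq_mul] at h2 ⊢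
  linarith

theorem aux_phi {Y : Type*} [NormedAddCommGroup Y] [NormedSpace ℝ Y]
    (φ : ℝ → ℝ) (c : ℝ) (y ybar : Y) (hd : HasDerivAt φ c ‖y - ybar‖) (ε : ℝ) (hε : 0 < ε) :
    ∀ᶠ v in 𝓝 y, |φ ‖v - ybar‖ - φ ‖y - ybar‖ - c * (‖v - ybar‖ - ‖y - ybar‖)|
      ≤ ε * ‖v - y‖ := by
  have h1 := (hasDerivAt_iff_isLittleO.1 hd).def hε
  have h2 : Tendsto (fun v : Y => ‖v - ybar‖) (𝓝 y) (𝓝 ‖y - ybar‖) :=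
    (by fun_prop : Continuous fun v : Y => ‖v - ybar‖).tendsto y
  filter_upwards [h2.eventually h1] with v hv
  simp only [Real.norm_eq_abs, smul_eq_mul] at hv
  rw [mul_comm c]
  refine hv.trans (mul_le_mul_of_nonneg_left ?_ hε.le)
  have := abs_norm_sub_norm_le (v - ybar) (y - ybar)
  simpa using this

theorem aux_sub_of_J {Y : Type*} [NormedAddCommGroup Y] [NormedSpace ℝ Y]
    (φ : ℝ → ℝ) (c : ℝ) (hc : 0 < c) (y ybar : Y) (hd : HasDerivAt φ c ‖y - ybar‖)
    (us : Y →L[ℝ] ℝ) (hus : us ∈ dualityMap (y - ybar)) :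
    c • us ∈ fSubdiff (fun v => φ ‖v - ybar‖) y := by
  intro ε hε
  filter_upwards [aux_phi φ c y ybar hd ε hε] with v hv
  have h1 := (abs_le.1 hv).1
  have h2 : us (v - ybar) ≤ ‖v - ybar‖ := by
    have := us.le_opNorm (v - ybar)
    rw [hus.1, one_mul] at this
    exact (le_abs_self _).trans this
  have h3 : us (v - y) = us (v - ybar) - ‖y - ybar‖ := by
    rw [← hus.2, ← map_sub]; congr 1; abel
  have h4 : c * us (v - y) ≤ c * (‖v - ybar‖ - ‖y - ybar‖) :=
    mul_le_mul_of_nonneg_left (by linarith) hc.le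
  simp only [smul_apply, smul_eq_mul]
  linarith

theorem aux_J_of_sub {Y : Type*} [NormedAddCommGroup Y] [NormedSpace ℝ Y]
    (φ : ℝ → ℝ) (c : ℝ) (hc : 0 < c) (y ybar : Y) (hy : y ≠ ybar)
    (hd : HasDerivAt φ c ‖y - ybar‖)
    (vs : Y →L[ℝ] ℝ) (hvs : vs ∈ fSubdiff (fun v => φ ‖v - ybar‖) y) :
    c⁻¹ • vs ∈ dualityMap (y - ybar) := by
  have key : ∀ h : Y, vs h ≤ c * (‖y - ybar + h‖ - ‖y - ybar‖) := by
    intro h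
    have key1 : ∀ ε : ℝ, 0 < ε →
        vs h ≤ c * (‖y - ybar + h‖ - ‖y - ybar‖) + ε * (2 * ‖h‖) := by
      intro ε hε
      have hev := (aux_phi φ c y ybar hd ε hε).and (hvs ε hε)
      have ht : Tendsto (fun s : ℝ => y + s • h) (𝓝[>] 0) (𝓝 y) := by
        have : Tendsto (fun s : ℝ => y + s • h) (𝓝 0) (𝓝 (y + (0:ℝ) • h)) :=
          (by fun_prop : Continuous fun s : ℝ => y + s • h).tendsto 0
        rw [zero_smul, add_zero] at this
        exact this.mono_left nhdsWithin_le_nhds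
      have hev2 := (ht.eventually hev).and (Ioo_mem_nhdsGT (zero_lt_one (α := ℝ)))
      obtain ⟨s, ⟨ha, hb⟩, hs0, hs1⟩ := hev2.exists
      have ha := (abs_le.1 ha).2
      simp only [add_sub_cancel_left, map_smul, smul_eq_mul, norm_smul, Real.norm_eq_abs,
        abs_of_pos hs0] at ha hb
      have hconv : ‖y + s • h - ybar‖ ≤ (1 - s) * ‖y - ybar‖ + s * ‖y - ybar + h‖ := by
        have he : y + s • h - ybar = (1 - s) • (y - ybar) + s • (y - ybar + h) := by
          module
        rw [he]
        refine (norm_add_le _ _).trans ?_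
        rw [norm_smul, norm_smul, Real.norm_eq_abs, Real.norm_eq_abs, abs_of_pos hs0,
          abs_of_pos (by linarith : 0 < 1 - s)]
      have hc2 := mul_le_mul_of_nonneg_left hconv hc.le
      refine le_of_mul_le_mul_left ?_ hs0
      nlinarith
    refine le_of_forall_pos_le_add fun δ hδ => ?_
    have := key1 (δ / (2 * ‖h‖ + 1)) (by positivity)
    refine this.trans ?_
    have : δ / (2 * ‖h‖ + 1) * (2 * ‖h‖) ≤ δ := by
      rw [div_mul_eq_mul_div, div_le_iff₀ (by positivity)]
      nlinarith [norm_nonneg h]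
    linarith
  have hu : 0 < ‖y - ybar‖ := norm_pos_iff.2 (sub_ne_zero.2 hy)
  have hle : ∀ h, vs h ≤ c * ‖h‖ := fun h =>
    (key h).trans (mul_le_mul_of_nonneg_left
      (by linarith [norm_add_le (y - ybar) h]) hc.le)
  have heq : vs (y - ybar) = c * ‖y - ybar‖ := by
    refine le_antisymm (hle _) ?_
    have := key (-(y - ybar))
    rw [add_neg_cancel, norm_zero, map_neg] at this
    linarith
  have hn : ‖vs‖ = c := by
    refine le_antisymm (vs.opNorm_le_bound hc.le fun h => ?_) ?_
    · rw [Real.norm_eq_abs, abs_le]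
      have := hle (-h)
      rw [map_neg, norm_neg] at this
      exact ⟨by linarith, hle h⟩
    · have := vs.le_opNorm (y - ybar)
      rw [heq] at this
      exact le_of_mul_le_mul_right ((le_abs_self _).trans this) hu
  refine ⟨?_, ?_⟩
  · rw [norm_smul, hn, Real.norm_eq_abs, abs_of_pos (by positivity)]
    field_simp
  · simp only [smul_apply, smul_eq_mul, heq]
    field_simp

/-- Proposition 6P1 (ii): for `g = φ∘‖·−ȳ‖`, the subdifferential (g,ρ)-slope factorizes
as `|∂F|_{g,ρ}(x,y) = φ'(‖y−ȳ‖)·|∂F|_{ξ_φ(y)ρ}(x,y)` where `ξ_φ(y) = 1/φ'(‖y−ȳ‖)`. -/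
theorem subdiffGSlope_eq_deriv_mul_subdiffSlope {X Y : Type*}
    [NormedAddCommGroup X] [NormedSpace ℝ X] [NormedAddCommGroup Y] [NormedSpace ℝ Y]
    (F : X → Set Y) (xbar : X) (ybar : Y)
    (hgraph : ybar ∈ F xbar)
    (φ φ' : ℝ → ℝ) (D : EReal)
    (hφ0 : φ 0 = 0)
    (hφnonneg : ∀ t : ℝ, 0 ≤ t → 0 ≤ φ t)
    (hφc0 : ContinuousWithinAt φ (Set.Ici 0) 0)
    (hderiv : ∀ t : ℝ, 0 < t → HasDerivAt φ (φ' t) t)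
    (hφ'pos : ∀ t : ℝ, 0 < t → 0 < φ' t)
    (hφ'cont : ContinuousOn φ' (Set.Ioi 0))
    (hD : Filter.Tendsto (fun t : ℝ => ((φ' t : ℝ) : EReal)) (𝓝[>] (0:ℝ)) (𝓝 D))
    (hDpos : 0 < D)
    (ρ : ℝ) (hρ : 0 < ρ) (p : X × Y) (hp : p ∈ svGraph F) (hy : p.2 ≠ ybar) :
    subdiffGSlopeRho F (fun v => φ ‖v - ybar‖) ρ p =
      ENNReal.ofReal (φ' ‖p.2 - ybar‖) *
        subdiffSlopeJ F ybar ((φ' ‖p.2 - ybar‖)⁻¹ * ρ) p := by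
  have hu : 0 < ‖p.2 - ybar‖ := norm_pos_iff.2 (sub_ne_zero.2 hy)
  have hc := hφ'pos _ hu
  have hd := hderiv _ hu
  generalize φ' ‖p.2 - ybar‖ = c at hc hd
  have hci : 0 < c⁻¹ := inv_pos.2 hc
  unfold subdiffGSlopeRho subdiffSlopeJ
  apply le_antisymm
  · have h0 : ENNReal.ofReal c ≠ 0 := by simpa using hc
    rw [ENNReal.mul_iInf_of_ne h0 ENNReal.ofReal_ne_top]
    refine le_iInf fun xs => ?_
    rw [ENNReal.mul_iInf_of_ne h0 ENNReal.ofReal_ne_top]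
    refine le_iInf fun ⟨ys, us, hus, hn, hN⟩ => ?_
    refine iInf₂_le_of_le (c • xs) ⟨c • ys, c • us,
      aux_sub_of_J φ c hc _ _ hd us hus, ?_, aux_cone _ _ _ _ c hc hN⟩ ?_
    · rw [aux_norm c hc]
      refine (mul_le_mul_of_nonneg_left hn hc.le).trans (le_of_eq ?_)
      field_simp
    · rw [norm_smul, Real.norm_eq_abs, abs_of_pos hc, ENNReal.ofReal_mul hc.le]
  · refine le_iInf₂ fun xs ⟨ys, vs, hvs, hn, hN⟩ => ?_
    have hx : ENNReal.ofReal ‖xs‖ = ENNReal.ofReal c * ENNReal.ofReal ‖c⁻¹ • xs‖ := by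
      rw [← ENNReal.ofReal_mul hc.le, norm_smul, Real.norm_eq_abs, abs_of_pos hci]
      congr 1
      field_simp
    rw [hx]
    refine mul_le_mul_right (iInf₂_le (c⁻¹ • xs) ⟨c⁻¹ • ys, c⁻¹ • vs,
      aux_J_of_sub φ c hc _ _ hy hd vs hvs, ?_, aux_cone _ _ _ _ _ hci hN⟩) _
    rw [aux_norm _ hci]
    exact mul_le_mul_of_nonneg_left hn hci.le
end

section
/- Let X and Y be normed linear spaces, F : X ⇉ Y a set-valued mapping, (x̄,ȳ) ∈ gph F, and φ : [0,∞) → [0,∞) continuously differentiable with φ(0)=0 and φ'(t)>0 for all t≥0. Then |∂F|_φ(x̄,ȳ) ≥ lim_{ρ↓0} inf{ φ'(‖y−ȳ‖)·|∂F|_ρ(x,y) : (x,y)∈gph F, x∉F⁻¹(ȳ), ‖x−x̄‖<ρ, ‖y−ȳ‖<ρ }, and if moreover φ'(0) < ∞, this inequality holds as an equality. -/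
open Filter Metric Set Topology ENNReal

/-- The strict subdifferential φ-slope `|∂F|_φ(x̄,ȳ)`. -/
noncomputable def strictSubdiffPhiSlope {X Y : Type*}
    [NormedAddCommGroup X] [NormedSpace ℝ X] [NormedAddCommGroup Y] [NormedSpace ℝ Y]
    (F : X → Set Y) (φ' : ℝ → ℝ) (xbar : X) (ybar : Y) : ℝ≥0∞ :=
  ⨆ (ρ : ℝ) (_ : 0 < ρ),
    ⨅ (p : X × Y) (_ : p ∈ svGraph F ∧ ybar ∉ F p.1 ∧
        dist p.1 xbar < ρ ∧ dist p.2 ybar < ρ),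
      ENNReal.ofReal (φ' ‖p.2 - ybar‖) *
        subdiffSlopeJ F ybar ((φ' ‖p.2 - ybar‖)⁻¹ * ρ) p

/-- Comparison of the slope constants: a smaller radius gives a larger slope. -/
theorem aux_slope_anti {X Y : Type*} [NormedAddCommGroup X] [NormedSpace ℝ X]
    [NormedAddCommGroup Y] [NormedSpace ℝ Y]
    (F : X → Set Y) (ybar : Y) {a b : ℝ} (h : a ≤ b) (p : X × Y) :
    subdiffSlopeJ F ybar b p ≤ subdiffSlopeJ F ybar a p := by
  unfold subdiffSlopeJ
  refine le_iInf₂ fun xs hxs => ?_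
  obtain ⟨ys, us, h1, h2, h3⟩ := hxs
  exact iInf₂_le xs ⟨ys, us, h1, h2.trans h, h3⟩

/-- Comparison of the two limits for general radius functions. -/
theorem aux_compare {X Y : Type*} [NormedAddCommGroup X] [NormedSpace ℝ X]
    [NormedAddCommGroup Y] [NormedSpace ℝ Y]
    (F : X → Set Y) (φ' : ℝ → ℝ) (xbar : X) (ybar : Y) (r s : ℝ → ℝ → ℝ)
    (h : ∀ ρ : ℝ, 0 < ρ → ∃ ρ' : ℝ, 0 < ρ' ∧ ρ' ≤ ρ ∧
      ∀ t : ℝ, 0 < t → t < ρ' → s t ρ' ≤ r t ρ) :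
    (⨆ (ρ : ℝ) (_ : 0 < ρ),
      ⨅ (p : X × Y) (_ : p ∈ svGraph F ∧ ybar ∉ F p.1 ∧
          dist p.1 xbar < ρ ∧ dist p.2 ybar < ρ),
        ENNReal.ofReal (φ' ‖p.2 - ybar‖) * subdiffSlopeJ F ybar (r ‖p.2 - ybar‖ ρ) p) ≤
    (⨆ (ρ : ℝ) (_ : 0 < ρ),
      ⨅ (p : X × Y) (_ : p ∈ svGraph F ∧ ybar ∉ F p.1 ∧
          dist p.1 xbar < ρ ∧ dist p.2 ybar < ρ),
        ENNReal.ofReal (φ' ‖p.2 - ybar‖) * subdiffSlopeJ F ybar (s ‖p.2 - ybar‖ ρ) p) := by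
  refine iSup₂_le fun ρ hρ => ?_
  obtain ⟨ρ', hρ', hle, H⟩ := h ρ hρ
  refine le_trans ?_ (le_iSup₂ (f := fun (ρ : ℝ) (_ : 0 < ρ) =>
      ⨅ (p : X × Y) (_ : p ∈ svGraph F ∧ ybar ∉ F p.1 ∧
          dist p.1 xbar < ρ ∧ dist p.2 ybar < ρ),
        ENNReal.ofReal (φ' ‖p.2 - ybar‖) * subdiffSlopeJ F ybar (s ‖p.2 - ybar‖ ρ) p) ρ' hρ')
  refine le_iInf₂ fun p hp => ?_
  obtain ⟨h1, h2, h3, h4⟩ := hp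
  refine (iInf₂_le p ⟨h1, h2, h3.trans_le hle, h4.trans_le hle⟩).trans ?_
  have hne : p.2 - ybar ≠ 0 := by
    intro h0
    rw [sub_eq_zero] at h0
    exact h2 (h0 ▸ h1)
  have ht : ‖p.2 - ybar‖ < ρ' := by rwa [← dist_eq_norm]
  gcongr
  exact aux_slope_anti F ybar (H _ (norm_pos_iff.2 hne) ht) p

/-- Proposition 6P2 (i): the strict subdifferential φ-slope dominates the corresponding
quantity built from the subdifferential ρ-slopes without the factor `ξ_φ(y)`; if
`φ'(0) < ∞`, this inequality holds as an equality. -/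
theorem strictSubdiffPhiSlope_ge {X Y : Type*}
    [NormedAddCommGroup X] [NormedSpace ℝ X] [NormedAddCommGroup Y] [NormedSpace ℝ Y]
    (F : X → Set Y) (xbar : X) (ybar : Y)
    (hgraph : ybar ∈ F xbar)
    (φ φ' : ℝ → ℝ) (D : EReal)
    (hφ0 : φ 0 = 0)
    (hφnonneg : ∀ t : ℝ, 0 ≤ t → 0 ≤ φ t)
    (hφc0 : ContinuousWithinAt φ (Set.Ici 0) 0)
    (hderiv : ∀ t : ℝ, 0 < t → HasDerivAt φ (φ' t) t)
    (hφ'pos : ∀ t : ℝ, 0 < t → 0 < φ' t)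
    (hφ'cont : ContinuousOn φ' (Set.Ioi 0))
    (hD : Filter.Tendsto (fun t : ℝ => ((φ' t : ℝ) : EReal)) (𝓝[>] (0:ℝ)) (𝓝 D))
    (hDpos : 0 < D) :
    (⨆ (ρ : ℝ) (_ : 0 < ρ),
      ⨅ (p : X × Y) (_ : p ∈ svGraph F ∧ ybar ∉ F p.1 ∧
          dist p.1 xbar < ρ ∧ dist p.2 ybar < ρ),
        ENNReal.ofReal (φ' ‖p.2 - ybar‖) * subdiffSlopeJ F ybar ρ p)
      ≤ strictSubdiffPhiSlope F φ' xbar ybar ∧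
    (D ≠ ⊤ →
      strictSubdiffPhiSlope F φ' xbar ybar =
        ⨆ (ρ : ℝ) (_ : 0 < ρ),
          ⨅ (p : X × Y) (_ : p ∈ svGraph F ∧ ybar ∉ F p.1 ∧
              dist p.1 xbar < ρ ∧ dist p.2 ybar < ρ),
            ENNReal.ofReal (φ' ‖p.2 - ybar‖) * subdiffSlopeJ F ybar ρ p) := by
  have key {P : ℝ → Prop} (hP : ∀ᶠ t in 𝓝[>] (0:ℝ), P t) :
      ∃ δ > 0, ∀ t : ℝ, 0 < t → t < δ → P t := by
    obtain ⟨δ, hδ, H⟩ := mem_nhdsGT_iff_exists_Ioo_subset.1 hP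
    exact ⟨δ, hδ, fun t h0 h1 => H ⟨h0, h1⟩⟩
  have A := aux_compare F φ' xbar ybar (fun _ ρ => ρ) (fun t ρ => (φ' t)⁻¹ * ρ) (by
    obtain ⟨c, hc0, hcD⟩ := EReal.lt_iff_exists_real_btwn.1 hDpos
    have hc : 0 < c := by exact_mod_cast hc0
    obtain ⟨δ, hδ, H⟩ := key (hD.eventually_const_lt hcD)
    intro ρ hρ
    refine ⟨min ρ (min δ (c * ρ)), by positivity, min_le_left _ _, fun t h0 h1 => ?_⟩
    have h2 : c < φ' t := by
      exact_mod_cast H t h0 (h1.trans_le ((min_le_right _ _).trans (min_le_left _ _)))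
    have h3 : min ρ (min δ (c * ρ)) ≤ c * ρ := (min_le_right _ _).trans (min_le_right _ _)
    rw [inv_mul_le_iff₀ (hφ'pos t h0)]
    nlinarith)
  refine ⟨A, fun hDtop => le_antisymm ?_ A⟩
  refine aux_compare F φ' xbar ybar (fun t ρ => (φ' t)⁻¹ * ρ) (fun _ ρ => ρ) ?_
  obtain ⟨C, hDC, -⟩ := EReal.lt_iff_exists_real_btwn.1 (lt_top_iff_ne_top.2 hDtop)
  have hC : 0 < C := by exact_mod_cast hDpos.trans hDC
  obtain ⟨δ, hδ, H⟩ := key (hD.eventually_lt_const hDC)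
  intro ρ hρ
  refine ⟨min ρ (min δ (C⁻¹ * ρ)), by positivity, min_le_left _ _, fun t h0 h1 => ?_⟩
  have h2 : φ' t < C := by
    exact_mod_cast H t h0 (h1.trans_le ((min_le_right _ _).trans (min_le_left _ _)))
  have h3 : min ρ (min δ (C⁻¹ * ρ)) ≤ C⁻¹ * ρ := (min_le_right _ _).trans (min_le_right _ _)
  refine h3.trans ?_
  have := hφ'pos t h0
  gcongr
end

section
/- Let X and Y be normed linear spaces, F : X ⇉ Y a set-valued mapping whose graph is convex, (x̄,ȳ) ∈ gph F, and φ : [0,∞) → [0,∞) continuously differentiable with φ(0)=0 and φ'(t)>0 for all t≥0. Then θ[φ]·sr_φ[F](x̄,ȳ) ≤ |∂F|_φ(x̄,ȳ), where θ[φ] := liminf_{t↓0} t·φ'(t)/φ(t). -/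
open Filter Metric Set Topology ENNReal

/-- The modulus of metric φ-subregularity
`sr_φ[F](x̄,ȳ) = liminf_{x→x̄, x∉F⁻¹(ȳ)} φ(d(ȳ,F(x)))/d(x,F⁻¹(ȳ))`.
(The value `φ(d(ȳ,F(x)))` is encoded as `inf_{y ∈ F(x)} φ(d(ȳ,y))`, which equals `+∞`
when `F(x) = ∅`.) -/
noncomputable def srPhi {X Y : Type*} [NormedAddCommGroup X] [NormedAddCommGroup Y]
    (F : X → Set Y) (φ : ℝ → ℝ) (xbar : X) (ybar : Y) : ℝ≥0∞ :=
  ⨆ (δ : ℝ) (_ : 0 < δ),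
    ⨅ (x : X) (_ : dist x xbar < δ ∧ ybar ∉ F x),
      (⨅ (y : Y) (_ : y ∈ F x), ENNReal.ofReal (φ (dist ybar y))) /
        ENNReal.ofReal (Metric.infDist x {u : X | ybar ∈ F u})

/-- The constant `θ[φ] = liminf_{t↓0} t·φ'(t)/φ(t)`. -/
noncomputable def thetaPhi (φ φ' : ℝ → ℝ) : ℝ≥0∞ :=
  Filter.liminf (fun t : ℝ => ENNReal.ofReal (t * φ' t / φ t)) (𝓝[>] (0:ℝ))

theorem normal_convex_aux {X Y : Type*} [NormedAddCommGroup X] [NormedSpace ℝ X]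
    [NormedAddCommGroup Y] [NormedSpace ℝ Y] {Ω : Set (X × Y)} (hΩ : Convex ℝ Ω)
    {p q : X × Y} (hq : q ∈ Ω) {s : (X →L[ℝ] ℝ) × (Y →L[ℝ] ℝ)}
    (hs : s ∈ prodNormalCone Ω p) : s.1 (q.1 - p.1) + s.2 (q.2 - p.2) ≤ 0 := by
  obtain ⟨hp, hs⟩ := hs
  by_contra! hL
  have hne : q ≠ p := by
    rintro rfl
    simp at hL
  have hn : 0 < ‖q - p‖ := norm_pos_iff.mpr (sub_ne_zero.mpr hne)
  set L := s.1 (q.1 - p.1) + s.2 (q.2 - p.2) with hLdef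
  have hev := hs (L / (2 * ‖q - p‖)) (by positivity)
  have ht : Tendsto (fun τ : ℝ => p + τ • (q - p)) (𝓝[>] (0:ℝ)) (𝓝[Ω \ {p}] p) := by
    apply tendsto_nhdsWithin_of_tendsto_nhds_of_eventually_within
    · have : Continuous (fun τ : ℝ => p + τ • (q - p)) := by fun_prop
      have h2 := this.tendsto 0
      simp only [zero_smul, add_zero] at h2
      exact h2.mono_left nhdsWithin_le_nhds
    · have : Ioo (0:ℝ) 1 ∈ 𝓝[>] (0:ℝ) := Ioo_mem_nhdsGT one_pos
      filter_upwards [this] with τ hτ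
      refine ⟨hΩ.add_smul_sub_mem hp hq ⟨hτ.1.le, hτ.2.le⟩, ?_⟩
      intro h
      have h3 : τ • (q - p) = 0 := by simpa using h
      rcases smul_eq_zero.mp h3 with h4 | h4
      · exact hτ.1.ne' h4
      · exact hne (sub_eq_zero.mp h4)
  have h5 := (ht.eventually hev).and self_mem_nhdsWithin
  obtain ⟨τ, h6, h7⟩ := h5.exists
  have h7 : 0 < τ := h7
  have e1 : (p + τ • (q - p)).1 - p.1 = τ • (q.1 - p.1) := by simp
  have e2 : (p + τ • (q - p)).2 - p.2 = τ • (q.2 - p.2) := by simp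
  have e3 : (p + τ • (q - p)) - p = τ • (q - p) := by simp
  rw [e1, e2, e3, map_smul, map_smul, norm_smul, Real.norm_of_nonneg h7.le, smul_eq_mul,
    smul_eq_mul, ← mul_add, ← hLdef] at h6
  have e4 : L / (2 * ‖q - p‖) * (τ * ‖q - p‖) = τ * L / 2 := by field_simp
  rw [e4] at h6
  have := mul_pos h7 hL
  linarith

/-- Proposition `iti`: if `F` has convex graph, then
`θ[φ]·sr_φ[F](x̄,ȳ) ≤ |∂F|_φ(x̄,ȳ)`. -/
theorem theta_mul_srPhi_le_strictSubdiffPhiSlope {X Y : Type*}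
    [NormedAddCommGroup X] [NormedSpace ℝ X] [NormedAddCommGroup Y] [NormedSpace ℝ Y]
    (F : X → Set Y) (xbar : X) (ybar : Y)
    (hgraph : ybar ∈ F xbar)
    (hFconv : Convex ℝ (svGraph F))
    (φ φ' : ℝ → ℝ) (D : EReal)
    (hφ0 : φ 0 = 0)
    (hφnonneg : ∀ t : ℝ, 0 ≤ t → 0 ≤ φ t)
    (hφc0 : ContinuousWithinAt φ (Set.Ici 0) 0)
    (hderiv : ∀ t : ℝ, 0 < t → HasDerivAt φ (φ' t) t)
    (hφ'pos : ∀ t : ℝ, 0 < t → 0 < φ' t)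
    (hφ'cont : ContinuousOn φ' (Set.Ioi 0))
    (hD : Filter.Tendsto (fun t : ℝ => ((φ' t : ℝ) : EReal)) (𝓝[>] (0:ℝ)) (𝓝 D))
    (hDpos : 0 < D) :
    thetaPhi φ φ' * srPhi F φ xbar ybar ≤ strictSubdiffPhiSlope F φ' xbar ybar := by
  refine ENNReal.mul_le_of_forall_lt fun α' hα β' hβ => ?_
  rw [← mul_one (α' * β')]
  refine ENNReal.mul_le_of_forall_lt fun γ hγ k' hk => ?_
  refine (mul_le_mul_left hγ.le k').trans ?_
  lift α' to NNReal using (hα.trans_le le_top).ne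
  lift β' to NNReal using (hβ.trans_le le_top).ne
  lift k' to NNReal using (hk.trans_le le_top).ne
  have hk1 : (k' : ℝ) < 1 := by exact_mod_cast hk
  obtain ⟨c, hc0, hcD⟩ := EReal.lt_iff_exists_real_btwn.mp hDpos
  have hc : 0 < c := by exact_mod_cast hc0
  have ev1 : ∀ᶠ t in 𝓝[>] (0:ℝ), c < φ' t := by
    filter_upwards [hD.eventually (lt_mem_nhds hcD)] with t ht
    exact_mod_cast ht
  have ev2 := eventually_lt_of_lt_liminf hα
  obtain ⟨r, hr, hrs⟩ := mem_nhdsGT_iff_exists_Ioo_subset.mp (ev1.and ev2)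
  have hr : 0 < r := hr
  simp only [srPhi, lt_iSup_iff] at hβ
  obtain ⟨δ, hδ, hβ⟩ := hβ
  have hk2 : 0 < 1 - (k' : ℝ) := by linarith
  set ρ := min (min r δ) (c * (1 - k')) with hρ
  have hρ0 : 0 < ρ := by positivity
  have hρr : ρ ≤ r := (min_le_left _ _).trans (min_le_left _ _)
  have hρδ : ρ ≤ δ := (min_le_left _ _).trans (min_le_right _ _)
  have hρc : ρ ≤ c * (1 - k') := min_le_right _ _
  refine le_iSup₂_of_le ρ hρ0 (le_iInf₂ fun p hp => ?_)
  obtain ⟨hpF, hpn, hpx, hpy⟩ := hp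
  have hpF' : p.2 ∈ F p.1 := hpF
  have hne : p.2 ≠ ybar := by
    intro h
    exact hpn (h ▸ hpF')
  have ht : 0 < ‖p.2 - ybar‖ := norm_pos_iff.mpr (sub_ne_zero.mpr hne)
  have htr : ‖p.2 - ybar‖ < r := by
    rw [← dist_eq_norm]
    exact hpy.trans_le hρr
  obtain ⟨g1, g2⟩ := hrs ⟨ht, htr⟩
  have hβ2 := hβ.le.trans (iInf₂_le p.1 ⟨hpx.trans_le hρδ, hpn⟩)
  have hβ3 := (ENNReal.mul_le_of_le_div hβ2).trans (iInf₂_le p.2 hpF')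
  rw [dist_comm, dist_eq_norm] at hβ3
  have hpos := hφ'pos _ ht
  have hφn := hφnonneg _ ht.le
  generalize hteq : ‖p.2 - ybar‖ = t at *
  set d := infDist p.1 {u : X | ybar ∈ F u} with hd
  have hd0 : 0 ≤ d := infDist_nonneg
  have hβ4 : (β' : ℝ) * d ≤ φ t := by
    rw [← ENNReal.ofReal_coe_nnreal, ← ENNReal.ofReal_mul (NNReal.coe_nonneg _)] at hβ3
    exact (ENNReal.ofReal_le_ofReal_iff hφn).mp hβ3
  have hα4 : (α' : ℝ) * φ t ≤ t * φ' t := by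
    rcases hφn.eq_or_lt with h | h
    · rw [← h]
      simp only [mul_zero]
      positivity
    · have g3 := g2.le
      rw [← ENNReal.ofReal_coe_nnreal,
        ENNReal.ofReal_le_ofReal_iff (by positivity), le_div_iff₀ h] at g3
      exact g3
  rw [← ENNReal.div_le_iff' (by simpa using hpos) ENNReal.ofReal_ne_top]
  refine le_iInf₂ fun xs hxs => ?_
  rw [ENNReal.div_le_iff' (by simpa using hpos) ENNReal.ofReal_ne_top,
    ← ENNReal.ofReal_mul hpos.le]
  obtain ⟨ys, us, ⟨hus1, hus2⟩, hyu, hN⟩ := hxs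
  have key : ys (p.2 - ybar) ≤ ‖xs‖ * d := by
    have hall : ∀ u ∈ {u : X | ybar ∈ F u}, ys (p.2 - ybar) ≤ ‖xs‖ * dist p.1 u := by
      intro u hu
      have h1 := normal_convex_aux hFconv (q := (u, ybar)) hu hN
      simp only [ContinuousLinearMap.neg_apply] at h1
      have h2 : ys (ybar - p.2) = - ys (p.2 - ybar) := by rw [← map_neg, neg_sub]
      have h3 : -xs (u - p.1) ≤ ‖xs‖ * ‖u - p.1‖ :=
        (neg_le_abs _).trans (xs.le_opNorm _)
      rw [dist_comm, dist_eq_norm]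
      linarith
    have hnon : {u : X | ybar ∈ F u}.Nonempty := ⟨xbar, hgraph⟩
    rcases (norm_nonneg xs).eq_or_lt with h | h
    · have := hall xbar hgraph
      rw [← h] at this ⊢
      simpa using this
    · rw [← div_le_iff₀' h]
      refine (le_infDist hnon).mpr fun {u} hu => ?_
      rw [div_le_iff₀' h]
      exact hall u hu
  have low : t - (φ' t)⁻¹ * ρ * t ≤ ys (p.2 - ybar) := by
    have h1 : (us - ys) (p.2 - ybar) ≤ (φ' t)⁻¹ * ρ * t := by
      refine (le_abs_self _).trans (((us - ys).le_opNorm _).trans ?_)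
      rw [hteq, norm_sub_rev]
      gcongr
    rw [ContinuousLinearMap.sub_apply, hus2, hteq] at h1
    linarith
  have hkρ : (φ' t)⁻¹ * ρ ≤ 1 - k' := by
    rw [inv_mul_le_iff₀ hpos]
    exact hρc.trans (by gcongr)
  have hkρ2 : (φ' t)⁻¹ * ρ < 1 := by
    rw [inv_mul_lt_iff₀ hpos, mul_one]
    refine (hρc.trans ?_).trans_lt g1
    nlinarith [NNReal.coe_nonneg k']
  have hdpos : 0 < d := by
    rcases hd0.eq_or_lt with h | h
    · rw [← h] at key
      nlinarith
    · exact h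
  have fin : (α' : ℝ) * β' * k' ≤ φ' t * ‖xs‖ := by
    refine le_of_mul_le_mul_right ?_ hdpos
    have a1 : (α' : ℝ) * (β' * d) ≤ t * φ' t :=
      (mul_le_mul_of_nonneg_left hβ4 (NNReal.coe_nonneg _)).trans hα4
    have a2 : t * k' ≤ ‖xs‖ * d := by nlinarith
    calc (α' : ℝ) * β' * k' * d = α' * (β' * d) * k' := by ring
      _ ≤ t * φ' t * k' := by gcongr
      _ = φ' t * (t * k') := by ring
      _ ≤ φ' t * (‖xs‖ * d) := by gcongr
      _ = _ := by ring
  have := ENNReal.ofReal_le_ofReal fin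
  refine le_trans (le_of_eq ?_) this
  rw [ENNReal.ofReal_mul (by positivity), ENNReal.ofReal_mul (by positivity)]
  simp
end

section
/- Let X and Y be metric spaces, F : X ⇉ Y a set-valued mapping, (x̄,ȳ) ∈ gph F, and φ : [0,∞) → [0,∞) continuously differentiable with φ(0)=0 and φ'(t)>0 for all t≥0. Then for every ρ>0 and every (x,y) ∈ gph F with y ≠ ȳ, the nonlocal (φ,ρ)-slope satisfies |∇F|_{φ,ρ}^◇(x,y) ≥ max{ φ'(d(y,ȳ))·|∇F|_ρ(x,y), φ(d(y,ȳ))/d_ρ((x,y),(x̄,ȳ)) }. -/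
open Filter Metric Set Topology ENNReal

/-- The nonlocal (φ,ρ)-slope `|∇F|_{φ,ρ}^◇(x,y)` of `F` at `p = (x,y) ∈ gph F`. -/
noncomputable def nonlocalPhiSlopeRho {X Y : Type*} [MetricSpace X] [MetricSpace Y]
    (F : X → Set Y) (φ : ℝ → ℝ) (ybar : Y) (ρ : ℝ) (p : X × Y) : ℝ≥0∞ :=
  ⨆ (q : X × Y) (_ : q ∈ svGraph F ∧ q ≠ p),
    ENNReal.ofReal (φ (dist p.2 ybar) - φ (dist q.2 ybar)) / ENNReal.ofReal (dRho ρ q p)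

/-- Proposition 6P3 (i): for `(x,y) ∈ gph F` with `y ≠ ȳ` and `ρ > 0`,
`|∇F|_{φ,ρ}^◇(x,y) ≥ max{φ'(d(y,ȳ))·|∇F|_ρ(x,y), φ(d(y,ȳ))/d_ρ((x,y),(x̄,ȳ))}`. -/
theorem nonlocalPhiSlope_ge_max {X Y : Type*} [MetricSpace X] [MetricSpace Y]
    (F : X → Set Y) (xbar : X) (ybar : Y)
    (hgraph : ybar ∈ F xbar)
    (φ φ' : ℝ → ℝ) (D : EReal)
    (hφ0 : φ 0 = 0)
    (hφnonneg : ∀ t : ℝ, 0 ≤ t → 0 ≤ φ t)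
    (hφc0 : ContinuousWithinAt φ (Set.Ici 0) 0)
    (hderiv : ∀ t : ℝ, 0 < t → HasDerivAt φ (φ' t) t)
    (hφ'pos : ∀ t : ℝ, 0 < t → 0 < φ' t)
    (hφ'cont : ContinuousOn φ' (Set.Ioi 0))
    (hD : Filter.Tendsto (fun t : ℝ => ((φ' t : ℝ) : EReal)) (𝓝[>] (0:ℝ)) (𝓝 D))
    (hDpos : 0 < D)
    (ρ : ℝ) (hρ : 0 < ρ) (p : X × Y) (hp : p ∈ svGraph F) (hy : p.2 ≠ ybar) :
    max (ENNReal.ofReal (φ' (dist p.2 ybar)) * slopeRhoF F ybar ρ p)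
        (ENNReal.ofReal (φ (dist p.2 ybar)) / ENNReal.ofReal (dRho ρ p (xbar, ybar)))
      ≤ nonlocalPhiSlopeRho F φ ybar ρ p := by
  have ht : 0 < dist p.2 ybar := dist_pos.mpr hy
  apply max_le
  · apply ENNReal.mul_le_of_forall_lt
    intro a ha b hb
    have hatop : a ≠ ⊤ := ne_top_of_lt ha
    have ha' : a.toReal < φ' (dist p.2 ybar) := by
      have h := (ENNReal.toReal_lt_toReal hatop ENNReal.ofReal_ne_top).mpr ha
      rwa [ENNReal.toReal_ofReal (hφ'pos _ ht).le] at h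
    have hsl := (hasDerivAt_iff_tendsto_slope.mp (hderiv _ ht)).eventually (lt_mem_nhds ha')
    rw [eventually_nhdsWithin_iff] at hsl
    have hcont : Tendsto (fun q : X × Y => dist q.2 ybar) (𝓝[svGraph F \ {p}] p)
        (𝓝 (dist p.2 ybar)) := by
      have hc : Continuous (fun q : X × Y => dist q.2 ybar) := by fun_prop
      exact (hc.tendsto p).mono_left nhdsWithin_le_nhds
    have hev := hcont.eventually hsl
    have hfr := Filter.frequently_lt_of_lt_limsup (by isBoundedDefault) hb
    obtain ⟨q, hbq, hq, hmem⟩ := (hfr.and_eventually (hev.and self_mem_nhdsWithin)).exists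
    have hlt : dist q.2 ybar < dist p.2 ybar := by
      by_contra hcon
      push Not at hcon
      rw [max_eq_right (by linarith)] at hbq
      simp at hbq
    have hs := hq hlt.ne
    rw [slope_def_field, lt_div_iff_of_neg (by linarith)] at hs
    refine le_trans ?_ (le_iSup₂_of_le q ⟨hmem.1, hmem.2⟩ le_rfl)
    refine (mul_le_mul_right hbq.le a).trans ?_
    rw [← mul_div_assoc]
    refine ENNReal.div_le_div_right ?_ _
    rw [← ENNReal.ofReal_toReal hatop, ← ENNReal.ofReal_mul ENNReal.toReal_nonneg,
      max_eq_left (by linarith)]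
    apply ENNReal.ofReal_le_ofReal
    linarith
  · refine le_iSup₂_of_le (xbar, ybar) ⟨hgraph, ?_⟩ ?_
    · rintro rfl
      exact hy rfl
    · simp [hφ0, dRho, dist_comm]
end
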